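/- Let n be a positive even integer, z ∈ I^FPF_n, and m ∈ ℕ. Then, in ℤ[β][x_1,…,x_{n+2m}], 𝔊^Sp_{(21)^m × z} = Σ_{w ∈ B_fpf(z)} β^{ℓ(w) − ℓ_fpf(z)} 𝔊_{1^{2m} × w}. -/

import Mathlib

open MvPolynomial

noncomputable section

/-- The coefficient ring `ℤ[β]`. -/
abbrev Rb : Type := Polynomial ℤ

/-- The indeterminate `β`. -/
def bb : Rb := Polynomial.X

/-- The order-reversing permutation `n⋯321`, i.e. `i ↦ n+1-i` in 1-indexed notation. -/
def revPerm (n : ℕ) : Equiv.Perm (Fin n) :=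
  ⟨Fin.rev, Fin.rev, fun i => Fin.rev_rev i, fun i => Fin.rev_rev i⟩

/-- `z` is a fixed-point-free involution. -/
def IsFPF {n : ℕ} (z : Equiv.Perm (Fin n)) : Prop :=
  z * z = 1 ∧ ∀ i, z i ≠ i

/-- `x_i + x_j + β x_i x_j`. -/
def oplus {n : ℕ} (i j : Fin n) : MvPolynomial (Fin n) Rb :=
  X i + X j + C bb * (X i * X j)

/-- `IsDivDiffB i j f g` encodes `∂_i^{(β)} f = g` where `j = i+1`:
`∂_i^{(β)} f = ((1+βx_j) f - s_i((1+βx_j) f)) / (x_i - x_j)`, stated multiplicatively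
(the quotient is exact, and `g` is uniquely determined since the ring is a domain). -/
def IsDivDiffB {n : ℕ} (i j : Fin n) (f g : MvPolynomial (Fin n) Rb) : Prop :=
  (X i - X j) * g =
    (1 + C bb * X j) * f - rename ⇑(Equiv.swap i j) ((1 + C bb * X j) * f)

/-- `∏_{1 ≤ i < j ≤ n-i} (x_i + x_j + β x_i x_j)` (variables 0-indexed). -/
def spTop (n : ℕ) : MvPolynomial (Fin n) Rb :=
  ∏ p ∈ Finset.univ.filter
      (fun p : Fin n × Fin n => p.1 < p.2 ∧ (p.1 : ℕ) + (p.2 : ℕ) + 2 ≤ n),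
    oplus p.1 p.2

/-- `x_1^{n-1} x_2^{n-2} ⋯ x_{n-1}^1` (variables 0-indexed). -/
def grTop (n : ℕ) : MvPolynomial (Fin n) Rb :=
  ∏ a : Fin n, X a ^ (n - 1 - (a : ℕ))

/-- The defining property of the family of symplectic Grothendieck polynomials. -/
def IsSpFam (n : ℕ) (G : Equiv.Perm (Fin n) → MvPolynomial (Fin n) Rb) : Prop :=
  G (revPerm n) = spTop n ∧
    ∀ z : Equiv.Perm (Fin n), IsFPF z →
      ∀ i j : Fin n, (j : ℕ) = (i : ℕ) + 1 →
        z i ≠ j → z j ≠ i → z j < z i →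
          IsDivDiffB i j (G z) (G (Equiv.swap i j * z * Equiv.swap i j))

/-- The defining property of the family of Grothendieck polynomials. -/
def IsGrothFam (n : ℕ) (G : Equiv.Perm (Fin n) → MvPolynomial (Fin n) Rb) : Prop :=
  G (revPerm n) = grTop n ∧
    ∀ (w : Equiv.Perm (Fin n)) (i j : Fin n), (j : ℕ) = (i : ℕ) + 1 →
      w j < w i → IsDivDiffB i j (G w) (G (w * Equiv.swap i j))

/-- The length (number of inversions) of a permutation. -/
def invLen {n : ℕ} (w : Equiv.Perm (Fin n)) : ℕ :=
  (Finset.univ.filter (fun p : Fin n × Fin n => p.1 < p.2 ∧ w p.2 < w p.1)).card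

/-- The fixed-point-free involution length `ℓ_fpf(z) = #{(i,j) : z(i) > z(j) < i < j}`. -/
def fpfLen {n : ℕ} (z : Equiv.Perm (Fin n)) : ℕ :=
  (Finset.univ.filter
      (fun p : Fin n × Fin n => z p.2 < z p.1 ∧ z p.2 < p.1 ∧ p.1 < p.2)).card

/-- The underlying function of `Θ = (1,2)(3,4)⋯(n-1,n)`. -/
def thetaFun (n : ℕ) (hn : n % 2 = 0) (i : Fin n) : Fin n :=
  ⟨if (i : ℕ) % 2 = 0 then (i : ℕ) + 1 else (i : ℕ) - 1, by
    have hi := i.isLt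
    split_ifs with h <;> omega⟩

/-- The fixed-point-free involution `Θ = (1,2)(3,4)⋯(n-1,n)`. -/
def theta (n : ℕ) (hn : n % 2 = 0) : Equiv.Perm (Fin n) :=
  Function.Involutive.toPerm (thetaFun n hn) (by
    intro i
    have hi := i.isLt
    apply Fin.ext
    simp only [thetaFun]
    split_ifs <;> omega)

/-- One step of the partial Hecke action: `heckeStep a z = some (z · s_{a+1})` when defined,
with `a` a 0-indexed letter (so `a` corresponds to the simple transposition of `a+1, a+2`
in 1-indexed notation). -/
def heckeStep {n : ℕ} (a : ℕ) (z : Equiv.Perm (Fin n)) : Option (Equiv.Perm (Fin n)) :=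
  if h : a + 1 < n then
    let i : Fin n := ⟨a, Nat.lt_of_succ_lt h⟩
    let j : Fin n := ⟨a + 1, h⟩
    if z i < z j then some (Equiv.swap i j * z * Equiv.swap i j)
    else if z i = j ∧ z j = i then none
    else if z i ≠ j ∧ z j ≠ i ∧ z j < z i then some z
    else none
  else none

/-- Apply a word of (0-indexed) letters to `z` via the partial Hecke action. -/
def heckeApply {n : ℕ} (l : List ℕ) (z : Equiv.Perm (Fin n)) :
    Option (Equiv.Perm (Fin n)) :=
  l.foldl (fun o a => o.bind (heckeStep a)) (some z)

/-- The simple transposition corresponding to the 0-indexed letter `a`. -/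
def swapAt (n : ℕ) (a : ℕ) : Equiv.Perm (Fin n) :=
  if h : a + 1 < n then Equiv.swap ⟨a, Nat.lt_of_succ_lt h⟩ ⟨a + 1, h⟩ else 1

/-- The permutation `s_{i_1} s_{i_2} ⋯ s_{i_l}` of a word. -/
def wordToPerm (n : ℕ) (l : List ℕ) : Equiv.Perm (Fin n) := (l.map (swapAt n)).prod

/-- `l` is a reduced word for `w`. -/
def IsReducedWord (n : ℕ) (w : Equiv.Perm (Fin n)) (l : List ℕ) : Prop :=
  (∀ a ∈ l, a + 1 < n) ∧ wordToPerm n l = w ∧ l.length = invLen w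

/-- The set of Hecke atoms `B_fpf(z)`. -/
def Bfpf (n : ℕ) (hn : n % 2 = 0) (z : Equiv.Perm (Fin n)) :
    Finset (Equiv.Perm (Fin n)) :=
  @Finset.filter _
    (fun w => ∃ l : List ℕ, IsReducedWord n w l ∧ heckeApply l (theta n hn) = some z)
    (Classical.decPred _) Finset.univ

/-- `extPerm z w` is the permutation `z × w` acting on the first `m` letters by `z`
and the last `n` letters by `w`. -/
def extPerm {m n : ℕ} (z : Equiv.Perm (Fin m)) (w : Equiv.Perm (Fin n)) :
    Equiv.Perm (Fin (m + n)) :=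
  finSumFinEquiv.symm.trans ((Equiv.sumCongr z w).trans finSumFinEquiv)

/-- `rank(z_{[i][j]}) = #{k ∈ [j] : z(k) ≤ i}` (1-indexed sizes `i, j`). -/
def permRank {n : ℕ} (z : Equiv.Perm (Fin n)) (i j : ℕ) : ℕ :=
  (Finset.univ.filter (fun k : Fin n => (k : ℕ) < j ∧ ((z k : Fin n) : ℕ) < i)).card

/-- The rank of the upper-left `i × j` corner of `A` (1-indexed sizes `i, j ≤ n`). -/
def cornerRank {n : ℕ} (A : Matrix (Fin n) (Fin n) ℂ) (i j : ℕ) : ℕ :=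
  Matrix.rank (Matrix.of fun (a : Fin (min i n)) (b : Fin (min j n)) =>
    A ⟨(a : ℕ), lt_of_lt_of_le a.isLt (min_le_right i n)⟩
      ⟨(b : ℕ), lt_of_lt_of_le b.isLt (min_le_right j n)⟩)

/-- The orthogonal Rothe diagram `D^O(z) = {(i, z(j)) : z(i) > z(j) ≤ i < j}` (0-indexed). -/
def DO (n : ℕ) (z : Equiv.Perm (Fin n)) : Finset (Fin n × Fin n) :=
  Finset.image (fun p : Fin n × Fin n => (p.1, z p.2))
    (Finset.univ.filter (fun p : Fin n × Fin n => z p.2 < z p.1 ∧ z p.2 ≤ p.1 ∧ p.1 < p.2))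

/-- The symplectic Rothe diagram `D^Sp(z) = {(i, z(j)) : z(i) > z(j) < i < j}` (0-indexed). -/
def DSp (n : ℕ) (z : Equiv.Perm (Fin n)) : Finset (Fin n × Fin n) :=
  Finset.image (fun p : Fin n × Fin n => (p.1, z p.2))
    (Finset.univ.filter (fun p : Fin n × Fin n => z p.2 < z p.1 ∧ z p.2 < p.1 ∧ p.1 < p.2))

/-- The essential set `Ess(D) = {(i,j) ∈ D : (i,j+1) ∉ D and (i+1,j) ∉ D}`. -/
def Ess {n : ℕ} (D : Finset (Fin n × Fin n)) : Finset (Fin n × Fin n) :=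
  D.filter (fun p =>
    (∀ q ∈ D, ¬(q.1 = p.1 ∧ (q.2 : ℕ) = (p.2 : ℕ) + 1)) ∧
    (∀ q ∈ D, ¬((q.1 : ℕ) = (p.1 : ℕ) + 1 ∧ q.2 = p.2)))

/-- A permutation is vexillary if it avoids the pattern 2143. -/
def Vexillary {n : ℕ} (z : Equiv.Perm (Fin n)) : Prop :=
  ¬ ∃ i j k l : Fin n, i < j ∧ j < k ∧ k < l ∧ z j < z i ∧ z i < z l ∧ z l < z k

/-- The ideal of `ℤ[x_1,…,x_N]` generated by symmetric polynomials with zero constant term. -/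
def ILambda (N : ℕ) : Ideal (MvPolynomial (Fin N) ℤ) :=
  Ideal.span {f : MvPolynomial (Fin N) ℤ |
    (∀ σ : Equiv.Perm (Fin N), rename (⇑σ) f = f) ∧ coeff 0 f = 0}

/-- Substitute `x_j = 0` for all `j > n`, producing a polynomial in `x_1,…,x_n`. -/
def truncVars (n N : ℕ) (f : MvPolynomial (Fin N) Rb) : MvPolynomial (Fin n) Rb :=
  aeval (fun i : Fin N => if h : (i : ℕ) < n then X ⟨(i : ℕ), h⟩ else 0) f

/-- The order used to list the elements of a pipe-dream subset `S`:
rows weakly increasing, columns strictly decreasing within a row. -/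
def rowOrder {n : ℕ} (p q : Fin n × Fin n) : Prop :=
  p.1 < q.1 ∨ (p.1 = q.1 ∧ q.2 < p.2)

/-- `δ(S)` is a symplectic Hecke word for `z` (with Hecke words computed from `Θ`);
here `L` is the listing of `S` in the order `rowOrder`, and `(a,b) ∈ S` (0-indexed)
contributes the 0-indexed letter `a + b`, i.e. the 1-indexed letter `(b+1)+(a+1)-1`. -/
def DeltaHeckeWord (n : ℕ) (hn : n % 2 = 0) (z : Equiv.Perm (Fin n))
    (S : Finset (Fin n × Fin n)) : Prop :=
  ∃ L : List (Fin n × Fin n), L.toFinset = S ∧ L.Chain' rowOrder ∧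
    heckeApply (L.map (fun p => (p.1 : ℕ) + (p.2 : ℕ))) (theta n hn) = some z

/-! ### Adjacent transpositions and lengths -/

theorem swap_lt_iff {n : ℕ} {i j : Fin n} (hij : (j : ℕ) = i + 1) {p q : Fin n}
    (h : ¬(p = i ∧ q = j)) (h' : ¬(p = j ∧ q = i)) :
    Equiv.swap i j p < Equiv.swap i j q ↔ p < q := by
  simp only [Equiv.swap_apply_def]
  simp only [Fin.lt_def, Fin.ext_iff] at *
  split_ifs <;> omega

theorem invLen_asc {n : ℕ} {i j : Fin n} (hij : (j : ℕ) = i + 1) (w : Equiv.Perm (Fin n))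
    (h : w i < w j) : invLen (w * Equiv.swap i j) = invLen w + 1 := by
  have hlt : i < j := by rw [Fin.lt_def]; omega
  have key : (Finset.univ.filter (fun p : Fin n × Fin n => p.1 < p.2 ∧
        (w * Equiv.swap i j) p.2 < (w * Equiv.swap i j) p.1)) =
      insert (i, j) ((Finset.univ.filter (fun p : Fin n × Fin n => p.1 < p.2 ∧ w p.2 < w p.1)).map
        ((Equiv.prodCongr (Equiv.swap i j) (Equiv.swap i j)).toEmbedding)) := by
    ext ⟨p, q⟩
    simp only [Finset.mem_filter, Finset.mem_univ, true_and, Finset.mem_insert,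
      Finset.mem_map_equiv]
    simp only [Equiv.Perm.mul_apply, Equiv.prodCongr_symm, Equiv.symm_swap,
      Equiv.prodCongr_apply, Prod.map, Prod.mk.injEq]
    by_cases h1 : p = i ∧ q = j
    · obtain ⟨rfl, rfl⟩ := h1
      simp [hlt, h]
    · by_cases h2 : p = j ∧ q = i
      · obtain ⟨rfl, rfl⟩ := h2
        simp [hlt.not_gt, h.not_gt, hlt.ne']
      · rw [swap_lt_iff hij h1 h2]; simp [h1]
  unfold invLen
  rw [key, Finset.card_insert_of_notMem, Finset.card_map]
  simp only [Finset.mem_map_equiv, Finset.mem_filter, Equiv.prodCongr_symm, Equiv.symm_swap,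
      Equiv.prodCongr_apply, Prod.map]
  simp [hlt.not_gt]

theorem invLen_desc {n : ℕ} {i j : Fin n} (hij : (j : ℕ) = i + 1) (w : Equiv.Perm (Fin n))
    (h : w j < w i) : invLen w = invLen (w * Equiv.swap i j) + 1 := by
  have := invLen_asc hij (w * Equiv.swap i j) (by simpa using h)
  simpa [mul_assoc] using this

theorem invLen_one {n : ℕ} : invLen (1 : Equiv.Perm (Fin n)) = 0 := by
  unfold invLen
  rw [Finset.card_eq_zero, Finset.filter_eq_empty_iff]
  rintro ⟨p, q⟩ - ⟨h1, h2⟩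
  exact absurd h1 (not_lt.2 (le_of_lt h2))

theorem invLen_inv {n : ℕ} (w : Equiv.Perm (Fin n)) : invLen w⁻¹ = invLen w := by
  unfold invLen
  refine Finset.card_bij' (fun p _ => (w⁻¹ p.2, w⁻¹ p.1)) (fun p _ => (w p.2, w p.1)) ?_ ?_ ?_ ?_ <;>
  simp +contextual

theorem asc_or_desc {n : ℕ} {i j : Fin n} (hij : (j : ℕ) = i + 1) (w : Equiv.Perm (Fin n)) :
    w i < w j ∨ w j < w i := by
  rcases lt_trichotomy (w i) (w j) with h | h | h
  · exact Or.inl h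
  · have := w.injective h
    rw [← this] at hij; omega
  · exact Or.inr h

theorem invLen_le {n : ℕ} (w : Equiv.Perm (Fin n)) : invLen w ≤ n * n := by
  unfold invLen
  refine (Finset.card_le_univ _).trans ?_
  simp

theorem eq_one_of_asc {n : ℕ} (w : Equiv.Perm (Fin n))
    (h : ∀ i j : Fin n, (j : ℕ) = i + 1 → w i < w j) : w = 1 := by
  have hm : StrictMono w := by
    intro a b hab
    obtain ⟨b, hb⟩ := b
    induction b with
    | zero => exact absurd hab (by simp [Fin.lt_def])
    | succ b ih =>
      have h1 := h ⟨b, by omega⟩ ⟨b + 1, hb⟩ rfl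
      rcases lt_or_eq_of_le (show (a : ℕ) ≤ b by simp [Fin.lt_def] at hab; omega) with h2 | h2
      · exact (ih (by omega) (by simpa [Fin.lt_def] using h2)).trans h1
      · have h3 : a = ⟨b, by omega⟩ := Fin.ext h2
        rw [h3]; exact h1
  let e : Fin n ≃o Fin n := hm.orderIsoOfSurjective _ w.surjective
  have : e = OrderIso.refl _ := Subsingleton.elim _ _
  ext x
  have h2 : e x = x := by rw [this]; rfl
  exact congrArg Fin.val h2

theorem eq_rev_of_desc {n : ℕ} (w : Equiv.Perm (Fin n))
    (h : ∀ i j : Fin n, (j : ℕ) = i + 1 → w j < w i) : w = revPerm n := by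
  have := eq_one_of_asc (revPerm n * w) (by
    intro i j hij
    exact Fin.rev_lt_rev.2 (h i j hij))
  have h2 : revPerm n * revPerm n = 1 := by
    ext x; simp [revPerm]
  calc w = revPerm n * (revPerm n * w) := by rw [← mul_assoc, h2, one_mul]
    _ = _ := by rw [this, mul_one]

/-- Descending induction on all permutations. -/
theorem perm_down_induction {n : ℕ} (P : Equiv.Perm (Fin n) → Prop) (h0 : P (revPerm n))
    (h1 : ∀ w (i j : Fin n), (j : ℕ) = i + 1 → w i < w j → P (w * Equiv.swap i j) → P w) :
    ∀ w, P w := by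
  intro w
  induction hk : n * n - invLen w using Nat.strong_induction_on generalizing w with
  | _ k ih =>
    by_cases hw : ∀ i j : Fin n, (j : ℕ) = i + 1 → w j < w i
    · rw [eq_rev_of_desc w hw]; exact h0
    · push Not at hw
      obtain ⟨i, j, hij, hle⟩ := hw
      have hlt : w i < w j := (asc_or_desc hij w).resolve_right (not_lt.2 hle)
      refine h1 w i j hij hlt (ih _ ?_ _ rfl)
      have := invLen_asc hij w hlt
      have := invLen_le (w * Equiv.swap i j)
      omega

/-! ### Fixed-point-free involutions -/

theorem IsFPF.app {n : ℕ} {z : Equiv.Perm (Fin n)} (hz : IsFPF z) (a : Fin n) : z (z a) = a := by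
  have := congrArg (fun f : Equiv.Perm (Fin n) => f a) hz.1
  simpa using this

theorem IsFPF.conj {n : ℕ} {z : Equiv.Perm (Fin n)} (hz : IsFPF z) (i j : Fin n) :
    IsFPF (Equiv.swap i j * z * Equiv.swap i j) := by
  constructor
  · have h1 := hz.1
    calc _ = Equiv.swap i j * (z * (Equiv.swap i j * Equiv.swap i j) * z) * Equiv.swap i j := by
          group
      _ = 1 := by simp [h1]
  · intro a h
    simp only [Equiv.Perm.mul_apply] at h
    apply hz.2 (Equiv.swap i j a)
    have := congrArg (Equiv.swap i j) h
    simpa using this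

theorem IsFPF.inv {n : ℕ} {z : Equiv.Perm (Fin n)} (hz : IsFPF z) : z⁻¹ = z :=
  inv_eq_of_mul_eq_one_left hz.1

theorem invLen_conj {n : ℕ} {i j : Fin n} (hij : (j : ℕ) = i + 1) {z : Equiv.Perm (Fin n)}
    (hz : IsFPF z) (h : z i < z j) :
    invLen (Equiv.swap i j * z * Equiv.swap i j) = invLen z + 2 := by
  have hlt : i < j := by rw [Fin.lt_def]; omega
  have h1 : invLen (Equiv.swap i j * z) = invLen z + 1 := by
    rw [← invLen_inv]
    simp only [mul_inv_rev, Equiv.swap_inv, hz.inv]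
    exact invLen_asc hij z h
  rw [invLen_asc hij, h1]
  simp only [Equiv.Perm.mul_apply]
  rw [swap_lt_iff hij]
  · exact h
  · rintro ⟨h2, h3⟩
    exact hz.2 i h2
  · rintro ⟨h2, h3⟩
    rw [h2, h3] at h
    exact absurd h hlt.not_gt

theorem card_lt {n : ℕ} {z : Equiv.Perm (Fin n)} (hz : IsFPF z) :
    2 * (Finset.univ.filter (fun i : Fin n => i < z i)).card = n := by
  have h1 : (Finset.univ.filter (fun i : Fin n => i < z i)).card =
      (Finset.univ.filter (fun i : Fin n => ¬ i < z i)).card := by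
    refine Finset.card_bij' (fun p _ => z p) (fun p _ => z p) ?_ ?_ ?_ ?_
    · simp +contextual [hz.app, le_of_lt]
    · intro a
      simp only [Finset.mem_filter, Finset.mem_univ, true_and, hz.app, not_lt]
      intro h
      exact lt_of_le_of_ne h (hz.2 a)
    · simp [hz.app]
    · simp [hz.app]
  have h2 := Finset.card_filter_add_card_filter_not (s := (Finset.univ : Finset (Fin n)))
    (fun i : Fin n => i < z i)
  simp only [Finset.card_univ, Fintype.card_fin] at h2
  omega

theorem fpfLen_eq {n : ℕ} {z : Equiv.Perm (Fin n)} (hz : IsFPF z) :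
    4 * fpfLen z + n = 2 * invLen z := by
  have h0 := card_lt hz
  suffices invLen z = 2 * fpfLen z + (Finset.univ.filter (fun i : Fin n => i < z i)).card by omega
  have e1 : invLen z = (Finset.univ.filter (fun p : Fin n × Fin n =>
        z p.2 < z p.1 ∧ z p.2 < p.1 ∧ p.1 < p.2)).card
      + ((Finset.univ.filter (fun p : Fin n × Fin n =>
        z p.2 < z p.1 ∧ p.1 < z p.2 ∧ p.1 < p.2)).card
      + (Finset.univ.filter (fun p : Fin n × Fin n =>
        z p.2 < z p.1 ∧ z p.2 = p.1 ∧ p.1 < p.2)).card) := by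
    unfold invLen
    rw [← Finset.card_union_of_disjoint, ← Finset.card_union_of_disjoint]
    · congr 1
      ext ⟨p, q⟩
      simp only [Finset.mem_filter, Finset.mem_univ, true_and, Finset.mem_union]
      have := lt_trichotomy (z q) p
      tauto
    · rw [Finset.disjoint_left]
      rintro ⟨p, q⟩
      simp only [Finset.mem_filter, Finset.mem_univ, true_and, Finset.mem_union]
      rintro h (h2 | h2)
      · exact absurd h.2.1 h2.2.1.not_gt
      · exact h.2.1.ne h2.2.1
    · rw [Finset.disjoint_left]
      rintro ⟨p, q⟩
      simp only [Finset.mem_filter, Finset.mem_univ, true_and]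
      rintro h h2
      exact h.2.1.ne' h2.2.1
  have e2 : (Finset.univ.filter (fun p : Fin n × Fin n =>
        z p.2 < z p.1 ∧ p.1 < z p.2 ∧ p.1 < p.2)).card = fpfLen z := by
    unfold fpfLen
    refine Finset.card_bij' (fun p _ => (z p.2, z p.1)) (fun p _ => (z p.2, z p.1)) ?_ ?_ ?_ ?_ <;>
    simp +contextual [hz.app]
  have e3 : (Finset.univ.filter (fun p : Fin n × Fin n =>
        z p.2 < z p.1 ∧ z p.2 = p.1 ∧ p.1 < p.2)).card =
      (Finset.univ.filter (fun i : Fin n => i < z i)).card := by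
    refine Finset.card_bij' (fun p _ => p.1) (fun p _ => (p, z p)) ?_ ?_ ?_ ?_
    · rintro ⟨p, q⟩
      simp only [Finset.mem_filter, Finset.mem_univ, true_and]
      rintro ⟨h1, h2, h3⟩
      rw [← h2, hz.app, h2]; exact h3
    · intro p
      simp +contextual [hz.app]
    · rintro ⟨p, q⟩
      simp only [Finset.mem_filter, Finset.mem_univ, true_and]
      rintro ⟨h1, h2, h3⟩
      rw [← h2, hz.app]
    · simp
  rw [e1, e2, e3]
  unfold fpfLen
  ring

theorem fpfLen_asc {n : ℕ} {i j : Fin n} (hij : (j : ℕ) = i + 1) {z : Equiv.Perm (Fin n)}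
    (hz : IsFPF z) (h : z i < z j) :
    fpfLen (Equiv.swap i j * z * Equiv.swap i j) = fpfLen z + 1 := by
  have h1 := fpfLen_eq hz
  have h2 := fpfLen_eq (hz.conj i j)
  rw [invLen_conj hij hz h] at h2
  omega

/-- At an ascent the two points are not matched. -/
theorem IsFPF.ne_of_asc {n : ℕ} {i j : Fin n} (hij : (j : ℕ) = i + 1) {z : Equiv.Perm (Fin n)}
    (hz : IsFPF z) (h : z i < z j) : z i ≠ j ∧ z j ≠ i := by
  have hlt : i < j := by rw [Fin.lt_def]; omega
  constructor
  · intro h2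
    have := hz.app i
    rw [h2] at this
    rw [h2, this] at h
    exact absurd h hlt.not_gt
  · intro h2
    have := hz.app j
    rw [h2] at this
    rw [h2, this] at h
    exact absurd h hlt.not_gt

theorem IsFPF.match_iff {n : ℕ} {i j : Fin n} {z : Equiv.Perm (Fin n)}
    (hz : IsFPF z) : z i = j ↔ z j = i := by
  constructor <;> (intro h; rw [← h, hz.app])

theorem IsFPF.conj_asc {n : ℕ} {i j : Fin n} (hij : (j : ℕ) = i + 1) {z : Equiv.Perm (Fin n)}
    (hz : IsFPF z) (h : z i < z j) :
    (Equiv.swap i j * z * Equiv.swap i j) i = z j ∧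
    (Equiv.swap i j * z * Equiv.swap i j) j = z i := by
  have := hz.ne_of_asc hij h
  constructor
  · simp only [Equiv.Perm.mul_apply, Equiv.swap_apply_left]
    exact Equiv.swap_apply_of_ne_of_ne this.2 (hz.2 j)
  · simp only [Equiv.Perm.mul_apply, Equiv.swap_apply_right]
    exact Equiv.swap_apply_of_ne_of_ne (hz.2 i) this.1

theorem IsFPF.conj_desc {n : ℕ} {i j : Fin n} {z : Equiv.Perm (Fin n)}
    (hz : IsFPF z) (h : z i ≠ j) :
    (Equiv.swap i j * z * Equiv.swap i j) i = z j ∧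
    (Equiv.swap i j * z * Equiv.swap i j) j = z i := by
  have h2 : z j ≠ i := fun h2 => h (hz.match_iff.2 h2)
  constructor
  · simp only [Equiv.Perm.mul_apply, Equiv.swap_apply_left]
    exact Equiv.swap_apply_of_ne_of_ne h2 (hz.2 j)
  · simp only [Equiv.Perm.mul_apply, Equiv.swap_apply_right]
    exact Equiv.swap_apply_of_ne_of_ne (hz.2 i) h

theorem conj_conj {n : ℕ} (i j : Fin n) (z : Equiv.Perm (Fin n)) :
    Equiv.swap i j * (Equiv.swap i j * z * Equiv.swap i j) * Equiv.swap i j = z := by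
  simp [mul_assoc]

theorem fpf_down_induction {n : ℕ} (P : Equiv.Perm (Fin n) → Prop) (h0 : P (revPerm n))
    (h1 : ∀ z (i j : Fin n), IsFPF z → (j : ℕ) = i + 1 → z i < z j →
      P (Equiv.swap i j * z * Equiv.swap i j) → P z) :
    ∀ z, IsFPF z → P z := by
  intro w
  induction hk : n * n - invLen w using Nat.strong_induction_on generalizing w with
  | _ k ih =>
    intro hfw
    by_cases hw : ∀ i j : Fin n, (j : ℕ) = i + 1 → w j < w i
    · rw [eq_rev_of_desc w hw]; exact h0
    · push Not at hw
      obtain ⟨i, j, hij, hle⟩ := hw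
      have hlt : w i < w j := (asc_or_desc hij w).resolve_right (not_lt.2 hle)
      refine h1 w i j hfw hij hlt (ih _ ?_ _ rfl (hfw.conj i j))
      have := invLen_conj hij hfw hlt
      have := invLen_le (Equiv.swap i j * w * Equiv.swap i j)
      omega

theorem theta_val {n : ℕ} (hn : n % 2 = 0) (i : Fin n) :
    (theta n hn i : ℕ) = if (i : ℕ) % 2 = 0 then (i : ℕ) + 1 else (i : ℕ) - 1 := rfl

theorem theta_fpf {n : ℕ} (hn : n % 2 = 0) : IsFPF (theta n hn) := by
  constructor
  · ext i
    simp only [Equiv.Perm.mul_apply, theta_val, Equiv.Perm.one_apply]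
    split_ifs <;> omega
  · intro i h
    have := congrArg Fin.val h
    rw [theta_val] at this
    split_ifs at this <;> omega

theorem fpfLen_theta {n : ℕ} (hn : n % 2 = 0) : fpfLen (theta n hn) = 0 := by
  unfold fpfLen
  rw [Finset.card_eq_zero, Finset.filter_eq_empty_iff]
  rintro ⟨p, q⟩ - ⟨h1, h2, h3⟩
  simp only [Fin.lt_def, theta_val] at h1 h2 h3
  split_ifs at h1 h2 <;> omega

theorem eq_theta {n : ℕ} (hn : n % 2 = 0) {z : Equiv.Perm (Fin n)} (hz : IsFPF z)
    (h : ∀ i j : Fin n, (j : ℕ) = i + 1 → z i < z j ∨ z i = j) : z = theta n hn := by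
  have key : ∀ k : ℕ, ∀ (hk : 2 * k + 1 < n), z ⟨2 * k, by omega⟩ = ⟨2 * k + 1, hk⟩ := by
    intro k
    induction k using Nat.strong_induction_on with
    | _ k ih =>
      intro hk
      have low : ∀ p : Fin n, (p : ℕ) < 2 * k → (z p : ℕ) < 2 * k := by
        intro p hp
        rcases Nat.even_or_odd' (p : ℕ) with ⟨q, hq | hq⟩
        · have := ih q (by omega) (by omega)
          have hp' : p = ⟨2 * q, by omega⟩ := Fin.ext hq
          rw [hp', this]; simp; omega
        · have := ih q (by omega) (by omega)
          have hp' : p = ⟨2 * q + 1, by omega⟩ := Fin.ext hq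
          rw [hp', ← this, hz.app]; simp; omega
      have low' : ∀ p : Fin n, 2 * k ≤ (p : ℕ) → 2 * k ≤ (z p : ℕ) := by
        intro p hp
        by_contra hc
        have := low (z p) (by omega)
        rw [hz.app] at this
        omega
      set a : Fin n := ⟨2 * k, by omega⟩ with ha
      have h1 : 2 * k ≤ (z a : ℕ) := low' a (by simp [ha])
      have h2 : (z a : ℕ) ≠ 2 * k := fun hh => hz.2 a (Fin.ext hh)
      have hlt := (z a).isLt
      have h3 := h ⟨(z a : ℕ) - 1, by omega⟩ (z a) (by simp; omega)
      rw [hz.app] at h3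
      rcases h3 with h3 | h3
      · have := low' ⟨(z a : ℕ) - 1, by omega⟩ (by simp; omega)
        rw [Fin.lt_def] at h3
        simp only [ha] at h3 this
        omega
      · have h5 : (z a : ℕ) - 1 = 2 * k := congrArg Fin.val (z.injective h3)
        apply Fin.ext
        change (z a : ℕ) = 2 * k + 1
        omega
  ext i
  rw [theta_val]
  have := i.isLt
  split_ifs with h0
  · have := key (i / 2) (by omega)
    have hi : i = ⟨2 * (i / 2), by omega⟩ := Fin.ext (by simp; omega)
    rw [hi, this]
  · have := key (i / 2) (by omega)
    have hi : i = ⟨2 * (i / 2) + 1, by omega⟩ := Fin.ext (by simp; omega)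
    conv_lhs => rw [hi, ← this, hz.app]
    simp; omega

/-! ### The partial Hecke action as a relation -/

/-- Relational form of the partial Hecke action (with `j = i + 1`). -/
def HStep {n : ℕ} (i j : Fin n) (z z' : Equiv.Perm (Fin n)) : Prop :=
  (z i < z j ∧ z' = Equiv.swap i j * z * Equiv.swap i j) ∨ (z j < z i ∧ z i ≠ j ∧ z' = z)

theorem HStep.fpf {n : ℕ} {i j : Fin n} {z z' : Equiv.Perm (Fin n)} (h : HStep i j z z')
    (hz : IsFPF z) : IsFPF z' := by
  rcases h with ⟨_, rfl⟩ | ⟨_, _, rfl⟩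
  · exact hz.conj i j
  · exact hz

theorem HStep.not_match {n : ℕ} {i j : Fin n} (hij : (j : ℕ) = i + 1) {z z' : Equiv.Perm (Fin n)}
    (h : HStep i j z z') (hz : IsFPF z) : z i ≠ j := by
  rcases h with ⟨h, rfl⟩ | ⟨_, h, rfl⟩
  · exact (hz.ne_of_asc hij h).1
  · exact h

theorem HStep.desc {n : ℕ} {i j : Fin n} (hij : (j : ℕ) = i + 1) {z z' : Equiv.Perm (Fin n)}
    (h : HStep i j z z') (hz : IsFPF z) : z' j < z' i ∧ z' i ≠ j := by
  rcases h with ⟨h, rfl⟩ | ⟨h, h', rfl⟩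
  · obtain ⟨h1, h2⟩ := hz.conj_asc hij h
    rw [h1, h2]
    exact ⟨h, hz.2 j⟩
  · exact ⟨h, h'⟩

theorem hstep_comm {n : ℕ} {i j k l : Fin n} (hij : (j : ℕ) = i + 1) (hkl : (l : ℕ) = k + 1)
    (h1 : i ≠ k) (h2 : i ≠ l) (h3 : j ≠ k) {y0 y z : Equiv.Perm (Fin n)} (hy : IsFPF y0)
    (ha : HStep i j y0 y) (hb : HStep k l y z) : ∃ y', HStep k l y0 y' ∧ HStep i j y' z := by
  have h4 : j ≠ l := fun h => h1 (Fin.ext (by rw [h] at hij; omega))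
  have hst : Equiv.swap i j * Equiv.swap k l = Equiv.swap k l * Equiv.swap i j := by
    apply Equiv.Perm.Disjoint.commute
    intro x
    by_cases hx : x = i ∨ x = j
    · right
      rcases hx with rfl | rfl
      · exact Equiv.swap_apply_of_ne_of_ne h1 h2
      · exact Equiv.swap_apply_of_ne_of_ne h3 h4
    · left
      push Not at hx
      exact Equiv.swap_apply_of_ne_of_ne hx.1 hx.2
  have ek : (Equiv.swap i j * y0 * Equiv.swap i j) k = Equiv.swap i j (y0 k) := by
    simp [Equiv.swap_apply_of_ne_of_ne h1.symm h3.symm]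
  have el : (Equiv.swap i j * y0 * Equiv.swap i j) l = Equiv.swap i j (y0 l) := by
    simp [Equiv.swap_apply_of_ne_of_ne h2.symm h4.symm]
  have ei : (Equiv.swap k l * y0 * Equiv.swap k l) i = Equiv.swap k l (y0 i) := by
    simp [Equiv.swap_apply_of_ne_of_ne h1 h2]
  have ej : (Equiv.swap k l * y0 * Equiv.swap k l) j = Equiv.swap k l (y0 j) := by
    simp [Equiv.swap_apply_of_ne_of_ne h3 h4]
  have hlt : i < j := by rw [Fin.lt_def]; omega
  have hlt' : k < l := by rw [Fin.lt_def]; omega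
  by_cases c1 : y0 k = i ∧ y0 l = j
  · have e1 : y0 i = k := hy.match_iff.1 c1.1
    have e2 : y0 j = l := hy.match_iff.1 c1.2
    have hsame : Equiv.swap i j * y0 * Equiv.swap i j = Equiv.swap k l * y0 * Equiv.swap k l := by
      have : y0 * Equiv.swap i j = Equiv.swap k l * y0 := by
        rw [Equiv.mul_swap_eq_swap_mul, e1, e2]
      have h5 : y0 * Equiv.swap k l = Equiv.swap i j * y0 := by
        rw [Equiv.mul_swap_eq_swap_mul, c1.1, c1.2]
      rw [mul_assoc, this, ← mul_assoc, hst, mul_assoc, ← h5, ← mul_assoc]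
    rcases ha with ⟨ha, rfl⟩ | ⟨ha, _, rfl⟩
    · rcases hb with ⟨hb, rfl⟩ | ⟨hb, _, rfl⟩
      · rw [ek, el, c1.1, c1.2] at hb
        simp at hb
        exact absurd hb hlt.not_gt
      · refine ⟨_, Or.inl ⟨by rw [c1.1, c1.2]; exact hlt, rfl⟩, Or.inr ⟨?_, ?_, hsame⟩⟩
        · rw [ei, ej, e1, e2]; simpa using hlt'
        · rw [ei, e1]; simpa using h4.symm
    · rw [e1, e2] at ha
      exact absurd ha hlt'.not_gt
  by_cases c2 : y0 k = j ∧ y0 l = i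
  · have e1 : y0 j = k := hy.match_iff.1 c2.1
    have e2 : y0 i = l := hy.match_iff.1 c2.2
    rcases ha with ⟨ha, rfl⟩ | ⟨ha, hh, rfl⟩
    · rw [e1, e2] at ha
      exact absurd ha hlt'.not_gt
    · rcases hb with ⟨hb, rfl⟩ | ⟨hb, hh', rfl⟩
      · rw [c2.1, c2.2] at hb
        exact absurd hb hlt.not_gt
      · exact ⟨_, Or.inr ⟨hb, hh', rfl⟩, Or.inr ⟨ha, hh, rfl⟩⟩
  have c3 : ¬ (y0 i = k ∧ y0 j = l) := fun h => c1 ⟨hy.match_iff.1 h.1, hy.match_iff.1 h.2⟩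
  have c4 : ¬ (y0 i = l ∧ y0 j = k) := fun h => c2 ⟨hy.match_iff.1 h.2, hy.match_iff.1 h.1⟩
  have q1 := swap_lt_iff hij c1 c2
  have q1' := swap_lt_iff hij (p := y0 l) (q := y0 k) (fun h => c2 ⟨h.2, h.1⟩) (fun h => c1 ⟨h.2, h.1⟩)
  have q2 := swap_lt_iff hkl c3 c4
  have q2' := swap_lt_iff hkl (p := y0 j) (q := y0 i) (fun h => c4 ⟨h.2, h.1⟩) (fun h => c3 ⟨h.2, h.1⟩)
  have q3 : Equiv.swap i j (y0 k) = l ↔ y0 k = l := by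
    rw [Equiv.swap_apply_eq_iff, Equiv.swap_apply_of_ne_of_ne h2.symm h4.symm]
  have q4 : Equiv.swap k l (y0 i) = j ↔ y0 i = j := by
    rw [Equiv.swap_apply_eq_iff, Equiv.swap_apply_of_ne_of_ne h3 h4]
  have hass : Equiv.swap k l * (Equiv.swap i j * y0 * Equiv.swap i j) * Equiv.swap k l =
      Equiv.swap i j * (Equiv.swap k l * y0 * Equiv.swap k l) * Equiv.swap i j := by
    simp only [← mul_assoc]
    rw [← hst]
    simp only [mul_assoc]
    rw [← hst]
  rcases ha with ⟨ha, rfl⟩ | ⟨ha, hh, rfl⟩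
  · unfold HStep at hb
    rw [ek, el, q1, q1', ne_eq, q3] at hb
    rcases hb with ⟨hb, rfl⟩ | ⟨hb, hh', rfl⟩
    · exact ⟨_, Or.inl ⟨hb, rfl⟩, Or.inl ⟨by rw [ei, ej, q2]; exact ha, hass⟩⟩
    · exact ⟨_, Or.inr ⟨hb, hh', rfl⟩, Or.inl ⟨ha, rfl⟩⟩
  · rcases hb with ⟨hb, rfl⟩ | ⟨hb, hh', rfl⟩
    · refine ⟨_, Or.inl ⟨hb, rfl⟩, Or.inr ⟨by rw [ei, ej, q2']; exact ha, by rw [ei, ne_eq, q4]; exact hh, rfl⟩⟩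
    · exact ⟨_, Or.inr ⟨hb, hh', rfl⟩, Or.inr ⟨ha, hh, rfl⟩⟩

/-- Total version of one step, used when the points are not matched with each other. -/
def stp {n : ℕ} (i j : Fin n) (z : Equiv.Perm (Fin n)) : Equiv.Perm (Fin n) :=
  if z i < z j then Equiv.swap i j * z * Equiv.swap i j else z

theorem hstep_iff_stp {n : ℕ} {i j : Fin n} (hij : (j : ℕ) = i + 1) {z z' : Equiv.Perm (Fin n)}
    (h : z i ≠ j) : HStep i j z z' ↔ z' = stp i j z := by
  unfold HStep stp
  rcases asc_or_desc hij z with h1 | h1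
  · simp [h1, h1.not_gt]
  · simp [h1, h1.not_gt, h]

/-- The three points `a, b, c` are not matched among each other. -/
def Unm {n : ℕ} (a b c : Fin n) (y : Equiv.Perm (Fin n)) : Prop :=
  ∀ x, (x = a ∨ x = b ∨ x = c) → y x ≠ a ∧ y x ≠ b ∧ y x ≠ c

theorem unm_s {n : ℕ} {a b c : Fin n} (hac : a ≠ c) (hbc : b ≠ c)
    {y : Equiv.Perm (Fin n)} (h : Unm a b c y) :
    Unm a b c (Equiv.swap a b * y * Equiv.swap a b) ∧
    (Equiv.swap a b * y * Equiv.swap a b) a = y b ∧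
    (Equiv.swap a b * y * Equiv.swap a b) b = y a ∧
    (Equiv.swap a b * y * Equiv.swap a b) c = y c := by
  have ha := h a (by simp)
  have hb := h b (by simp)
  have hc := h c (by simp)
  have e1 : (Equiv.swap a b * y * Equiv.swap a b) a = y b := by
    simp [Equiv.swap_apply_of_ne_of_ne hb.1 hb.2.1]
  have e2 : (Equiv.swap a b * y * Equiv.swap a b) b = y a := by
    simp [Equiv.swap_apply_of_ne_of_ne ha.1 ha.2.1]
  have e3 : (Equiv.swap a b * y * Equiv.swap a b) c = y c := by
    simp [Equiv.swap_apply_of_ne_of_ne hac.symm hbc.symm, Equiv.swap_apply_of_ne_of_ne hc.1 hc.2.1]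
  refine ⟨?_, e1, e2, e3⟩
  rintro x (rfl | rfl | rfl)
  · rw [e1]; exact hb
  · rw [e2]; exact ha
  · rw [e3]; exact hc

theorem unm_t {n : ℕ} {a b c : Fin n} (hac : a ≠ c) (hab : a ≠ b)
    {y : Equiv.Perm (Fin n)} (h : Unm a b c y) :
    Unm a b c (Equiv.swap b c * y * Equiv.swap b c) ∧
    (Equiv.swap b c * y * Equiv.swap b c) a = y a ∧
    (Equiv.swap b c * y * Equiv.swap b c) b = y c ∧
    (Equiv.swap b c * y * Equiv.swap b c) c = y b := by
  have ha := h a (by simp)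
  have hb := h b (by simp)
  have hc := h c (by simp)
  have e1 : (Equiv.swap b c * y * Equiv.swap b c) b = y c := by
    simp [Equiv.swap_apply_of_ne_of_ne hc.2.1 hc.2.2]
  have e2 : (Equiv.swap b c * y * Equiv.swap b c) c = y b := by
    simp [Equiv.swap_apply_of_ne_of_ne hb.2.1 hb.2.2]
  have e3 : (Equiv.swap b c * y * Equiv.swap b c) a = y a := by
    simp [Equiv.swap_apply_of_ne_of_ne hab hac, Equiv.swap_apply_of_ne_of_ne ha.2.1 ha.2.2]
  refine ⟨?_, e3, e1, e2⟩
  rintro x (rfl | rfl | rfl)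
  · rw [e3]; exact ha
  · rw [e1]; exact hc
  · rw [e2]; exact hb

theorem swap_braid {n : ℕ} {a b c : Fin n} (hab : a ≠ b) (hac : a ≠ c) (hbc : b ≠ c) :
    Equiv.swap a b * (Equiv.swap b c * Equiv.swap a b) =
      Equiv.swap b c * (Equiv.swap a b * Equiv.swap b c) := by
  ext x
  simp only [Equiv.Perm.mul_apply, Equiv.swap_apply_def]
  grind

theorem stp_braid {n : ℕ} {a b c : Fin n} (hab : a ≠ b) (hac : a ≠ c) (hbc : b ≠ c)
    {y : Equiv.Perm (Fin n)} (h : Unm a b c y) :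
    stp a b (stp b c (stp a b y)) = stp b c (stp a b (stp b c y)) := by
  have hyab : y a ≠ y b := fun h => hab (y.injective h)
  have hyac : y a ≠ y c := fun h => hac (y.injective h)
  have hybc : y b ≠ y c := fun h => hbc (y.injective h)
  obtain ⟨us, s1, s2, s3⟩ := unm_s hac hbc h
  obtain ⟨ut, t1, t2, t3⟩ := unm_t hac hab h
  obtain ⟨ust, st1, st2, st3⟩ := unm_t hac hab us
  obtain ⟨uts, ts1, ts2, ts3⟩ := unm_s hac hbc ut
  have hbr := swap_braid hab hac hbc
  have hbr' : Equiv.swap a b * (Equiv.swap b c * (Equiv.swap a b * y * Equiv.swap a b) * Equiv.swap b c)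
      * Equiv.swap a b = Equiv.swap b c * (Equiv.swap a b * (Equiv.swap b c * y * Equiv.swap b c) *
      Equiv.swap a b) * Equiv.swap b c := by
    calc _ = (Equiv.swap a b * (Equiv.swap b c * Equiv.swap a b)) * y *
          (Equiv.swap a b * (Equiv.swap b c * Equiv.swap a b)) := by simp only [mul_assoc]
      _ = _ := by rw [hbr]; simp only [mul_assoc]
  unfold stp
  rcases lt_or_gt_of_ne hyab with h1 | h1 <;> rcases lt_or_gt_of_ne hyac with h2 | h2 <;>
    rcases lt_or_gt_of_ne hybc with h3 | h3 <;>
    first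
    | exact absurd (h1.trans h3) h2.not_gt
    | exact absurd (h3.trans h1) h2.not_gt
    | simp [h1, h2, h3, h1.not_gt, h2.not_gt, h3.not_gt, s1, s2, s3, t1, t2, t3, st1, st2, st3, ts1, ts2, ts3, -Equiv.Perm.coe_mul, hbr']

theorem braid_contra1 {n : ℕ} {a b c : Fin n} (hab : (b : ℕ) = a + 1) (hbc : (c : ℕ) = b + 1)
    {y0 y1 y2 z : Equiv.Perm (Fin n)} (hy : IsFPF y0)
    (h1 : HStep a b y0 y1) (h2 : HStep b c y1 y2) (h3 : HStep a b y2 z) : Unm a b c y0 := by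
  have nab : a ≠ b := fun h => by rw [h] at hab; omega
  have nbc : b ≠ c := fun h => by rw [h] at hbc; omega
  have nac : a ≠ c := fun h => by rw [h] at hab; omega
  have lab : a < b := by rw [Fin.lt_def]; omega
  have lbc : b < c := by rw [Fin.lt_def]; omega
  have f1 := h1.fpf hy
  have f2 := h2.fpf f1
  have m1 := h1.not_match hab hy
  have m2 := h2.not_match hbc f1
  have m3 := h3.not_match hab f2
  have key1 : y0 a ≠ c := by
    intro e
    have e' : y0 c = a := hy.match_iff.1 e
    have : y0 b ≠ a := fun h => nbc ((y0.injective (h.trans e'.symm)))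
    rcases h1 with ⟨h1, rfl⟩ | ⟨h1, _, rfl⟩
    · apply m2
      simp [e]
      exact Equiv.swap_apply_of_ne_of_ne nac.symm nbc.symm
    · rcases h2 with ⟨h2, rfl⟩ | ⟨h2, _, rfl⟩
      · apply m3
        simp [Equiv.swap_apply_of_ne_of_ne nab nac, e]
      · rw [e] at h1
        rw [e'] at h2
        have hb1 := (hy.2 b)
        simp only [Fin.lt_def, ne_eq, Fin.ext_iff] at *
        omega
  have key2 : y0 b ≠ c := by
    intro e
    have e' : y0 c = b := hy.match_iff.1 e
    rcases h1 with ⟨h1, rfl⟩ | ⟨h1, _, rfl⟩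
    · have ea : (Equiv.swap a b * y0 * Equiv.swap a b) a = c := by
        simp [e]; exact Equiv.swap_apply_of_ne_of_ne nac.symm nbc.symm
      have ec : (Equiv.swap a b * y0 * Equiv.swap a b) c = a := f1.match_iff.1 ea
      have eb : (Equiv.swap a b * y0 * Equiv.swap a b) b = y0 a := by
        simp; exact Equiv.swap_apply_of_ne_of_ne (hy.2 a) m1
      rcases h2 with ⟨h2, rfl⟩ | ⟨h2, _, rfl⟩
      · apply m3
        rw [Equiv.Perm.mul_apply, Equiv.Perm.mul_apply, Equiv.swap_apply_of_ne_of_ne nab nac, ea]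
        simp
      · rw [eb, ec] at h2
        rw [e] at h1
        have := hy.2 a
        simp only [Fin.lt_def, ne_eq, Fin.ext_iff] at *
        omega
    · exact m2 e
  have k3 : y0 b ≠ a := fun h => m1 (hy.match_iff.1 h)
  have k4 : y0 c ≠ a := fun h => key1 (hy.match_iff.1 h)
  have k5 : y0 c ≠ b := fun h => key2 (hy.match_iff.1 h)
  rintro x (rfl | rfl | rfl)
  · exact ⟨hy.2 _, m1, key1⟩
  · exact ⟨k3, hy.2 _, key2⟩
  · exact ⟨k4, k5, hy.2 _⟩

theorem braid_contra2 {n : ℕ} {a b c : Fin n} (hab : (b : ℕ) = a + 1) (hbc : (c : ℕ) = b + 1)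
    {y0 y1 y2 z : Equiv.Perm (Fin n)} (hy : IsFPF y0)
    (h1 : HStep b c y0 y1) (h2 : HStep a b y1 y2) (h3 : HStep b c y2 z) : Unm a b c y0 := by
  have nab : a ≠ b := fun h => by rw [h] at hab; omega
  have nbc : b ≠ c := fun h => by rw [h] at hbc; omega
  have nac : a ≠ c := fun h => by rw [h] at hab; omega
  have lab : a < b := by rw [Fin.lt_def]; omega
  have lbc : b < c := by rw [Fin.lt_def]; omega
  have f1 := h1.fpf hy
  have f2 := h2.fpf f1
  have m1 := h1.not_match hbc hy
  have m2 := h2.not_match hab f1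
  have m3 := h3.not_match hbc f2
  have key1 : y0 a ≠ c := by
    intro e
    have e' : y0 c = a := hy.match_iff.1 e
    have : y0 b ≠ c := fun h => nab ((y0.injective (h.trans e.symm))).symm
    rcases h1 with ⟨h1, rfl⟩ | ⟨h1, _, rfl⟩
    · apply m2
      simp [Equiv.swap_apply_of_ne_of_ne nab nac, e]
    · rcases h2 with ⟨h2, rfl⟩ | ⟨h2, _, rfl⟩
      · apply m3
        simp [e]
        exact Equiv.swap_apply_of_ne_of_ne nac.symm nbc.symm
      · rw [e'] at h1
        rw [e] at h2
        have hb1 := (hy.2 b)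
        simp only [Fin.lt_def, ne_eq, Fin.ext_iff] at *
        omega
  have key2 : y0 b ≠ a := by
    intro e
    have e' : y0 a = b := hy.match_iff.1 e
    rcases h1 with ⟨h1, rfl⟩ | ⟨h1, _, rfl⟩
    · have ea : (Equiv.swap b c * y0 * Equiv.swap b c) c = a := by
        simp [e]; exact Equiv.swap_apply_of_ne_of_ne nab nac
      have ec : (Equiv.swap b c * y0 * Equiv.swap b c) a = c := f1.match_iff.1 ea
      have eb : (Equiv.swap b c * y0 * Equiv.swap b c) b = y0 c := by
        simp; exact Equiv.swap_apply_of_ne_of_ne (fun h => m1 (hy.match_iff.1 h)) (hy.2 c)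
      rcases h2 with ⟨h2, rfl⟩ | ⟨h2, _, rfl⟩
      · apply m3
        rw [Equiv.Perm.mul_apply, Equiv.Perm.mul_apply, Equiv.swap_apply_right, ec]
        exact Equiv.swap_apply_of_ne_of_ne nac.symm nbc.symm
      · rw [eb, ec] at h2
        rw [e] at h1
        have := hy.2 c
        have hcb : y0 c ≠ b := fun h => m1 (hy.match_iff.1 h)
        simp only [Fin.lt_def, ne_eq, Fin.ext_iff] at *
        omega
    · exact m2 e'
  have k3 : y0 c ≠ b := fun h => m1 (hy.match_iff.1 h)
  have k4 : y0 c ≠ a := fun h => key1 (hy.match_iff.1 h)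
  have k5 : y0 a ≠ b := fun h => key2 (hy.match_iff.1 h)
  rintro x (rfl | rfl | rfl)
  · exact ⟨hy.2 _, k5, key1⟩
  · exact ⟨key2, hy.2 _, m1⟩
  · exact ⟨k4, k3, hy.2 _⟩

theorem unm_stp1 {n : ℕ} {a b c : Fin n} (hac : a ≠ c) (hbc : b ≠ c)
    {y : Equiv.Perm (Fin n)} (h : Unm a b c y) : Unm a b c (stp a b y) := by
  unfold stp; split_ifs
  · exact (unm_s hac hbc h).1
  · exact h

theorem unm_stp2 {n : ℕ} {a b c : Fin n} (hac : a ≠ c) (hab : a ≠ b)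
    {y : Equiv.Perm (Fin n)} (h : Unm a b c y) : Unm a b c (stp b c y) := by
  unfold stp; split_ifs
  · exact (unm_t hac hab h).1
  · exact h

theorem hstep_braid1 {n : ℕ} {a b c : Fin n} (hab : (b : ℕ) = a + 1) (hbc : (c : ℕ) = b + 1)
    {y0 y1 y2 z : Equiv.Perm (Fin n)} (hy : IsFPF y0)
    (h1 : HStep a b y0 y1) (h2 : HStep b c y1 y2) (h3 : HStep a b y2 z) :
    ∃ x1 x2, HStep b c y0 x1 ∧ HStep a b x1 x2 ∧ HStep b c x2 z := by
  have nab : a ≠ b := fun h => by rw [h] at hab; omega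
  have nbc : b ≠ c := fun h => by rw [h] at hbc; omega
  have nac : a ≠ c := fun h => by rw [h] at hab; omega
  have u0 := braid_contra1 hab hbc hy h1 h2 h3
  rw [hstep_iff_stp hab (u0 a (by simp)).2.1] at h1
  have u1 := unm_stp1 nac nbc u0
  subst h1
  rw [hstep_iff_stp hbc (u1 b (by simp)).2.2] at h2
  have u2 := unm_stp2 nac nab u1
  subst h2
  rw [hstep_iff_stp hab (u2 a (by simp)).2.1] at h3
  have v1 := unm_stp2 nac nab u0
  have v2 := unm_stp1 nac nbc v1
  refine ⟨_, _, (hstep_iff_stp hbc (u0 b (by simp)).2.2).2 rfl,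
    (hstep_iff_stp hab (v1 a (by simp)).2.1).2 rfl,
    (hstep_iff_stp hbc (v2 b (by simp)).2.2).2 ?_⟩
  rw [h3, stp_braid nab nac nbc u0]

theorem hstep_braid2 {n : ℕ} {a b c : Fin n} (hab : (b : ℕ) = a + 1) (hbc : (c : ℕ) = b + 1)
    {y0 y1 y2 z : Equiv.Perm (Fin n)} (hy : IsFPF y0)
    (h1 : HStep b c y0 y1) (h2 : HStep a b y1 y2) (h3 : HStep b c y2 z) :
    ∃ x1 x2, HStep a b y0 x1 ∧ HStep b c x1 x2 ∧ HStep a b x2 z := by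
  have nab : a ≠ b := fun h => by rw [h] at hab; omega
  have nbc : b ≠ c := fun h => by rw [h] at hbc; omega
  have nac : a ≠ c := fun h => by rw [h] at hab; omega
  have u0 := braid_contra2 hab hbc hy h1 h2 h3
  rw [hstep_iff_stp hbc (u0 b (by simp)).2.2] at h1
  have u1 := unm_stp2 nac nab u0
  subst h1
  rw [hstep_iff_stp hab (u1 a (by simp)).2.1] at h2
  have u2 := unm_stp1 nac nbc u1
  subst h2
  rw [hstep_iff_stp hbc (u2 b (by simp)).2.2] at h3
  have v1 := unm_stp1 nac nbc u0
  have v2 := unm_stp2 nac nab v1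
  refine ⟨_, _, (hstep_iff_stp hab (u0 a (by simp)).2.1).2 rfl,
    (hstep_iff_stp hbc (v1 b (by simp)).2.2).2 rfl,
    (hstep_iff_stp hab (v2 a (by simp)).2.1).2 ?_⟩
  rw [h3, stp_braid nab nac nbc u0]

/-! ### Hecke atoms -/

/-- `HAtom w z`: `w` is a Hecke atom of `z`, built one letter at a time. -/
inductive HAtom {n : ℕ} (hn : n % 2 = 0) : Equiv.Perm (Fin n) → Equiv.Perm (Fin n) → Prop
  | base : HAtom hn 1 (theta n hn)
  | step {w z z' : Equiv.Perm (Fin n)} (i j : Fin n) (hij : (j : ℕ) = i + 1) :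
      HAtom hn w z → w i < w j → HStep i j z z' → HAtom hn (w * Equiv.swap i j) z'

theorem HAtom.fpf {n : ℕ} {hn : n % 2 = 0} {w z : Equiv.Perm (Fin n)} (h : HAtom hn w z) :
    IsFPF z := by
  induction h with
  | base => exact theta_fpf hn
  | step i j hij _ _ hs ih => exact hs.fpf ih

theorem HAtom.len {n : ℕ} {hn : n % 2 = 0} {w z : Equiv.Perm (Fin n)} (h : HAtom hn w z) :
    fpfLen z ≤ invLen w := by
  induction h with
  | base => rw [fpfLen_theta]; omega
  | step i j hij hw hasc hs ih =>
    rw [invLen_asc hij _ hasc]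
    rcases hs with ⟨h1, rfl⟩ | ⟨h1, _, rfl⟩
    · rw [fpfLen_asc hij hw.fpf h1]; omega
    · omega

theorem HAtom.desc {n : ℕ} {hn : n % 2 = 0} {w z : Equiv.Perm (Fin n)} (h : HAtom hn w z)
    {a b : Fin n} (hab : (b : ℕ) = a + 1) (hd : w b < w a) :
    ∃ y, HAtom hn (w * Equiv.swap a b) y ∧ HStep a b y z := by
  induction hk : invLen w using Nat.strong_induction_on generalizing w z a b with
  | _ k IH =>
  cases h with
  | base => 
    simp only [Equiv.Perm.one_apply, Fin.lt_def] at hd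
    omega
  | @step v y _ i j hij hv hasc hs =>
    by_cases hia : i = a
    · have hjb : j = b := Fin.ext (by rw [hij, hab, hia])
      subst hia hjb
      refine ⟨y, ?_, hs⟩
      simpa [mul_assoc] using hv
    · have hlen := invLen_asc hij v hasc
      by_cases hjb : j = a
      · -- letters i, i+1 = j = a, b = a+1
        subst hjb
        have nij : i ≠ j := fun h => by rw [h] at hij; omega
        have njb : j ≠ b := fun h => by rw [h] at hab; omega
        have nib : i ≠ b := fun h => by rw [h] at hij; omega
        simp only [Equiv.Perm.mul_apply, Equiv.swap_apply_right,
          Equiv.swap_apply_of_ne_of_ne nib.symm njb.symm] at hd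
        -- hd : v b < v i ; hasc : v i < v j
        obtain ⟨y1, hy1, hs1⟩ := IH _ (by omega) hv hab (hd.trans hasc) rfl
        have hlen2 := invLen_desc hab v (hd.trans hasc)
        have hd2 : (v * Equiv.swap j b) j < (v * Equiv.swap j b) i := by
          simp only [Equiv.Perm.mul_apply, Equiv.swap_apply_left,
            Equiv.swap_apply_of_ne_of_ne nij nib]
          exact hd
        obtain ⟨y0, hy0, hs0⟩ := IH _ (by omega) hy1 hij hd2 rfl
        obtain ⟨x1, x2, g1, g2, g3⟩ := hstep_braid1 hij hab hy0.fpf hs0 hs1 hs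
        refine ⟨x2, ?_, g3⟩
        have r1 := HAtom.step j b hab hy0 (by
          simp only [Equiv.Perm.mul_apply, Equiv.swap_apply_right,
            Equiv.swap_apply_of_ne_of_ne nib.symm njb.symm, 
            Equiv.swap_apply_of_ne_of_ne nij nib]
          exact hasc) g1
        have r2 := HAtom.step i j hij r1 (by
          simp only [Equiv.Perm.mul_apply, Equiv.swap_apply_right, Equiv.swap_apply_left,
            Equiv.swap_apply_of_ne_of_ne nib.symm njb.symm, 
            Equiv.swap_apply_of_ne_of_ne nij nib]
          exact hd.trans hasc) g2
        have hbr := swap_braid nij nib njb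
        convert r2 using 1
        calc v * Equiv.swap i j * Equiv.swap j b
            = v * Equiv.swap j b * (Equiv.swap j b * (Equiv.swap i j * Equiv.swap j b)) := by
              simp [mul_assoc]
          _ = _ := by rw [← hbr]; simp only [mul_assoc]
      · by_cases hib : i = b
        · subst hib
          have nij : i ≠ j := fun h => by rw [h] at hij; omega
          have nai : a ≠ i := fun h => by rw [h] at hab; omega
          have naj : a ≠ j := fun h => by rw [h] at hab; omega
          simp only [Equiv.Perm.mul_apply, Equiv.swap_apply_left,
            Equiv.swap_apply_of_ne_of_ne nai naj] at hd
          -- hd : v j < v a; hasc : v i < v j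
          obtain ⟨y1, hy1, hs1⟩ := IH _ (by omega) hv hab (hasc.trans hd) rfl
          have hlen2 := invLen_desc hab v (hasc.trans hd)
          have hd2 : (v * Equiv.swap a i) j < (v * Equiv.swap a i) i := by
            simp only [Equiv.Perm.mul_apply, Equiv.swap_apply_right,
              Equiv.swap_apply_of_ne_of_ne naj.symm nij.symm]
            exact hd
          obtain ⟨y0, hy0, hs0⟩ := IH _ (by omega) hy1 hij hd2 rfl
          obtain ⟨x1, x2, g1, g2, g3⟩ := hstep_braid2 hab hij hy0.fpf hs0 hs1 hs
          refine ⟨x2, ?_, g3⟩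
          have r1 := HAtom.step a i hab hy0 (by
            simp only [Equiv.Perm.mul_apply, Equiv.swap_apply_left,
              Equiv.swap_apply_of_ne_of_ne nai naj, 
              Equiv.swap_apply_of_ne_of_ne naj.symm nij.symm]
            exact hasc) g1
          have r2 := HAtom.step i j hij r1 (by
            simp only [Equiv.Perm.mul_apply, Equiv.swap_apply_right, Equiv.swap_apply_left,
              Equiv.swap_apply_of_ne_of_ne nai naj, 
              Equiv.swap_apply_of_ne_of_ne naj.symm nij.symm]
            exact hasc.trans hd) g2
          have hbr := swap_braid nai naj nij
          convert r2 using 1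
          calc v * Equiv.swap i j * Equiv.swap a i
              = v * Equiv.swap a i * (Equiv.swap a i * (Equiv.swap i j * Equiv.swap a i)) := by
                simp [mul_assoc]
            _ = _ := by rw [hbr]; simp only [mul_assoc]
        · have hjb' : j ≠ b := fun h => hia (Fin.ext (by rw [h] at hij; omega))
          have ea : Equiv.swap i j a = a := Equiv.swap_apply_of_ne_of_ne (Ne.symm hia) (Ne.symm hjb)
          have eb : Equiv.swap i j b = b := Equiv.swap_apply_of_ne_of_ne (Ne.symm hib) (Ne.symm hjb')
          have ei : Equiv.swap a b i = i := Equiv.swap_apply_of_ne_of_ne hia hib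
          have ej : Equiv.swap a b j = j := Equiv.swap_apply_of_ne_of_ne hjb hjb'
          simp only [Equiv.Perm.mul_apply, ea, eb] at hd
          obtain ⟨y1, hy1, hs1⟩ := IH _ (by omega) hv hab hd rfl
          obtain ⟨y', g1, g2⟩ := hstep_comm hab hij (Ne.symm hia) (Ne.symm hjb) (Ne.symm hib)
            hy1.fpf hs1 hs
          refine ⟨y', ?_, g2⟩
          have r1 := HAtom.step i j hij hy1 (by simpa [ei, ej] using hasc) g1
          convert r1 using 1
          rw [mul_assoc, mul_assoc, Equiv.mul_swap_eq_swap_mul (f := Equiv.swap i j), ea, eb]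

theorem HAtom.unique {n : ℕ} {hn : n % 2 = 0} {w z z' : Equiv.Perm (Fin n)} (h : HAtom hn w z)
    (h' : HAtom hn w z') : z = z' := by
  induction h generalizing z' with
  | base =>
    generalize hv : (1 : Equiv.Perm (Fin n)) = v at h'
    cases h' with
    | base => rfl
    | @step u y _ i j hij hu hasc hs =>
      have := invLen_asc hij u hasc
      rw [← hv, invLen_one] at this
      omega
  | @step v y z i j hij hv hasc hs ih =>
    obtain ⟨y', hy', hs'⟩ := h'.desc hij (by simpa using hasc)
    have : v * Equiv.swap i j * Equiv.swap i j = v := by simp [mul_assoc]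
    rw [this] at hy'
    have := ih hy'
    subst this
    have hne : ¬ (y i < y j ∧ y j < y i) := fun h => absurd h.1 h.2.not_gt
    rcases hs with ⟨h1, rfl⟩ | ⟨h1, _, rfl⟩ <;> rcases hs' with ⟨h2, rfl⟩ | ⟨h2, _, rfl⟩ <;> tauto

/-! ### Comparison with the definition through words -/

theorem heckeApply_append {n : ℕ} (l : List ℕ) (a : ℕ) (z : Equiv.Perm (Fin n)) :
    heckeApply (l ++ [a]) z = (heckeApply l z).bind (heckeStep a) := by
  simp [heckeApply, List.foldl_append]

theorem heckeStep_iff {n : ℕ} {i j : Fin n} (hij : (j : ℕ) = i + 1) {z z' : Equiv.Perm (Fin n)}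
    (hz : IsFPF z) : heckeStep (i : ℕ) z = some z' ↔ HStep i j z z' := by
  have hlt : (i : ℕ) + 1 < n := by rw [← hij]; exact j.isLt
  have hj : (⟨(i : ℕ) + 1, hlt⟩ : Fin n) = j := Fin.ext hij.symm
  have hm := hz.match_iff (i := i) (j := j)
  unfold heckeStep HStep
  simp only [hlt, dif_pos, Fin.eta, hj]
  rcases asc_or_desc hij z with h | h
  · simp [h, h.not_gt, eq_comm]
  · by_cases h2 : z i = j
    · rw [if_neg h.not_gt, if_pos ⟨h2, hm.1 h2⟩]
      simp [h2]
      intro h5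
      rw [h2, hm.1 h2] at h
      rw [hm.1 h2] at h5
      exact absurd h5 h.not_gt
    · have h3 : z j ≠ i := fun h3 => h2 (hm.2 h3)
      simp [h, h.not_gt, h2, h3, eq_comm]

theorem swapAt_eq {n : ℕ} {i j : Fin n} (hij : (j : ℕ) = i + 1) :
    swapAt n (i : ℕ) = Equiv.swap i j := by
  have hlt : (i : ℕ) + 1 < n := by rw [← hij]; exact j.isLt
  have hj : (⟨(i : ℕ) + 1, hlt⟩ : Fin n) = j := Fin.ext hij.symm
  unfold swapAt
  simp only [hlt, dif_pos, Fin.eta, hj]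

theorem wordToPerm_append (n : ℕ) (l : List ℕ) (a : ℕ) :
    wordToPerm n (l ++ [a]) = wordToPerm n l * swapAt n a := by
  simp [wordToPerm]

theorem invLen_word (n : ℕ) (l : List ℕ) (h : ∀ a ∈ l, a + 1 < n) :
    invLen (wordToPerm n l) ≤ l.length := by
  induction l using List.reverseRecOn with
  | nil => simp [wordToPerm, invLen_one]
  | append_singleton l a ih =>
    have ha : a + 1 < n := h a (by simp)
    have h1 := ih (fun b hb => h b (by simp [hb]))
    rw [wordToPerm_append]
    have hij : ((⟨a + 1, ha⟩ : Fin n) : ℕ) = ((⟨a, by omega⟩ : Fin n) : ℕ) + 1 := rfl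
    have e := swapAt_eq hij
    simp only at e
    rw [e]
    simp only [List.length_append, List.length_cons, List.length_nil]
    rcases asc_or_desc hij (wordToPerm n l) with h2 | h2
    · rw [invLen_asc hij _ h2]; omega
    · have := invLen_desc hij _ h2; omega

theorem word_iff_hatom {n : ℕ} (hn : n % 2 = 0) (w z : Equiv.Perm (Fin n)) :
    (∃ l : List ℕ, IsReducedWord n w l ∧ heckeApply l (theta n hn) = some z) ↔ HAtom hn w z := by
  constructor
  · rintro ⟨l, ⟨h1, h2, h3⟩, h4⟩
    induction l using List.reverseRecOn generalizing w z with
    | nil =>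
      simp [wordToPerm] at h2
      simp [heckeApply] at h4
      subst h2 h4
      exact HAtom.base
    | append_singleton l a ih =>
      have ha : a + 1 < n := h1 a (by simp)
      have hl : ∀ b ∈ l, b + 1 < n := fun b hb => h1 b (by simp [hb])
      rw [wordToPerm_append] at h2
      have hij : ((⟨a + 1, ha⟩ : Fin n) : ℕ) = ((⟨a, by omega⟩ : Fin n) : ℕ) + 1 := rfl
      have e := swapAt_eq hij
      simp only at e
      rw [e] at h2
      rw [heckeApply_append] at h4
      obtain ⟨y, hy, hs⟩ := Option.bind_eq_some_iff.1 h4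
      simp only [List.length_append, List.length_cons, List.length_nil] at h3
      have hle := invLen_word n l hl
      have hasc : wordToPerm n l ⟨a, by omega⟩ < wordToPerm n l ⟨a + 1, ha⟩ := by
        refine (asc_or_desc hij _).resolve_right (fun hd => ?_)
        have := invLen_desc hij _ hd
        rw [h2] at this
        omega
      have := invLen_asc hij _ hasc
      rw [h2] at this
      have hA := ih _ _ hy hl rfl (by omega)
      rw [← h2]
      exact HAtom.step _ _ hij hA hasc ((heckeStep_iff hij hA.fpf).1 hs)
  · intro h
    induction h with
    | base => exact ⟨[], ⟨by simp, by simp [wordToPerm], by simp [invLen_one]⟩, by simp [heckeApply]⟩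
    | @step v y z i j hij hv hasc hs ih =>
      obtain ⟨l, ⟨h1, h2, h3⟩, h4⟩ := ih
      refine ⟨l ++ [(i : ℕ)], ⟨?_, ?_, ?_⟩, ?_⟩
      · intro a ha
        rcases List.mem_append.1 ha with ha | ha
        · exact h1 a ha
        · simp at ha
          have := j.isLt
          omega
      · rw [wordToPerm_append, h2, swapAt_eq hij]
      · simp [h3, invLen_asc hij _ hasc]
      · rw [heckeApply_append, h4]
        exact (heckeStep_iff hij hv.fpf).2 hs

theorem mem_Bfpf {n : ℕ} (hn : n % 2 = 0) (w z : Equiv.Perm (Fin n)) :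
    w ∈ Bfpf n hn z ↔ HAtom hn w z := by
  unfold Bfpf
  rw [← word_iff_hatom]
  simp only [Finset.mem_filter, Finset.mem_univ, true_and]

/-! ### Padding by `(21)^m` and `1^{2m}` -/

theorem extPerm_natAdd {p n : ℕ} (z : Equiv.Perm (Fin p)) (w : Equiv.Perm (Fin n)) (i : Fin n) :
    extPerm z w (Fin.natAdd p i) = Fin.natAdd p (w i) := by
  simp [extPerm]

theorem extPerm_castAdd {p n : ℕ} (z : Equiv.Perm (Fin p)) (w : Equiv.Perm (Fin n)) (i : Fin p) :
    extPerm z w (Fin.castAdd n i) = Fin.castAdd n (z i) := by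
  simp [extPerm]

theorem perm_ext_sum {p n : ℕ} {f g : Equiv.Perm (Fin (p + n))}
    (h1 : ∀ i, f (Fin.castAdd n i) = g (Fin.castAdd n i))
    (h2 : ∀ i, f (Fin.natAdd p i) = g (Fin.natAdd p i)) : f = g := by
  apply Equiv.ext
  intro x
  refine Fin.addCases h1 h2 x

theorem extPerm_mul {p n : ℕ} (z z' : Equiv.Perm (Fin p)) (w w' : Equiv.Perm (Fin n)) :
    extPerm (z * z') (w * w') = extPerm z w * extPerm z' w' := by
  apply perm_ext_sum <;> intro i <;> simp [extPerm_castAdd, extPerm_natAdd]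

theorem extPerm_swap {p n : ℕ} (i j : Fin n) :
    extPerm (1 : Equiv.Perm (Fin p)) (Equiv.swap i j) =
      Equiv.swap (Fin.natAdd p i) (Fin.natAdd p j) := by
  apply perm_ext_sum <;> intro k
  · rw [extPerm_castAdd, Equiv.swap_apply_of_ne_of_ne]
    · simp
    · simp [Fin.ext_iff]; omega
    · simp [Fin.ext_iff]; omega
  · rw [extPerm_natAdd]
    simp only [Equiv.swap_apply_def, Fin.ext_iff, Fin.val_natAdd]
    split_ifs <;> first | rfl | (simp at *; omega) | (exfalso; omega)

theorem extPerm_one {p n : ℕ} : extPerm (1 : Equiv.Perm (Fin p)) (1 : Equiv.Perm (Fin n)) = 1 := by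
  apply perm_ext_sum <;> intro i <;> simp [extPerm_castAdd, extPerm_natAdd]

theorem extPerm_inj {p n : ℕ} {z : Equiv.Perm (Fin p)} {w w' : Equiv.Perm (Fin n)}
    (h : extPerm z w = extPerm z w') : w = w' := by
  apply Equiv.ext
  intro i
  have := congrArg (fun f : Equiv.Perm (Fin (p + n)) => f (Fin.natAdd p i)) h
  simpa [extPerm_natAdd] using this

theorem extPerm_conj {p n : ℕ} (z : Equiv.Perm (Fin p)) (w : Equiv.Perm (Fin n)) (i j : Fin n) :
    extPerm z (Equiv.swap i j * w * Equiv.swap i j) =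
      Equiv.swap (Fin.natAdd p i) (Fin.natAdd p j) * extPerm z w *
        Equiv.swap (Fin.natAdd p i) (Fin.natAdd p j) := by
  rw [← extPerm_swap, ← extPerm_mul, ← extPerm_mul]; simp

theorem extPerm_mul_swap {p n : ℕ} (w : Equiv.Perm (Fin n)) (i j : Fin n) :
    extPerm (1 : Equiv.Perm (Fin p)) (w * Equiv.swap i j) =
      extPerm 1 w * Equiv.swap (Fin.natAdd p i) (Fin.natAdd p j) := by
  rw [← extPerm_swap, ← extPerm_mul]; simp

theorem extPerm_theta {p n : ℕ} (hp : p % 2 = 0) (hn : n % 2 = 0) (hpn : (p + n) % 2 = 0) :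
    extPerm (theta p hp) (theta n hn) = theta (p + n) hpn := by
  apply perm_ext_sum <;> intro i
  · rw [extPerm_castAdd]
    apply Fin.ext
    simp [theta_val]
  · rw [extPerm_natAdd]
    apply Fin.ext
    simp only [theta_val, Fin.val_natAdd]
    have : (p + (i : ℕ)) % 2 = (i : ℕ) % 2 := by omega
    rw [this]
    split_ifs <;> omega

theorem extPerm_fpf {p n : ℕ} {z : Equiv.Perm (Fin p)} {w : Equiv.Perm (Fin n)}
    (hz : IsFPF z) (hw : IsFPF w) : IsFPF (extPerm z w) := by
  constructor
  · rw [← extPerm_mul, hz.1, hw.1, extPerm_one]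
  · intro i
    refine Fin.addCases (fun i => ?_) (fun i => ?_) i
    · rw [extPerm_castAdd]
      intro h
      exact hz.2 i (Fin.castAdd_injective _ _ h)
    · rw [extPerm_natAdd]
      intro h
      exact hw.2 i (Fin.natAdd_injective _ _ h)

theorem HStep.ext {p n : ℕ} {u : Equiv.Perm (Fin p)} {i j : Fin n} {z z' : Equiv.Perm (Fin n)}
    (h : HStep i j z z') :
    HStep (Fin.natAdd p i) (Fin.natAdd p j) (extPerm u z) (extPerm u z') := by
  rcases h with ⟨h, rfl⟩ | ⟨h, h', rfl⟩
  · refine Or.inl ⟨?_, extPerm_conj _ _ _ _⟩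
    rw [extPerm_natAdd, extPerm_natAdd]; simpa using h
  · refine Or.inr ⟨?_, ?_, rfl⟩
    · rw [extPerm_natAdd, extPerm_natAdd]; simpa using h
    · rw [extPerm_natAdd]
      intro h
      exact h' (Fin.natAdd_injective _ _ h)

theorem HAtom.ext {p n : ℕ} (hp : p % 2 = 0) {hn : n % 2 = 0} (hpn : (p + n) % 2 = 0)
    {w z : Equiv.Perm (Fin n)} (h : HAtom hn w z) :
    HAtom hpn (extPerm 1 w) (extPerm (theta p hp) z) ∧
    invLen (extPerm (1 : Equiv.Perm (Fin p)) w) = invLen w ∧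
    fpfLen (extPerm (theta p hp) z) = fpfLen z := by
  induction h with
  | base =>
    rw [extPerm_one, extPerm_theta hp hn hpn]
    exact ⟨HAtom.base, by rw [invLen_one, invLen_one], by rw [fpfLen_theta, fpfLen_theta]⟩
  | @step v y z i j hij hv hasc hs ih =>
    obtain ⟨h1, h2, h3⟩ := ih
    have hij' : ((Fin.natAdd p j : Fin (p + n)) : ℕ) = (Fin.natAdd p i : Fin (p + n)) + 1 := by
      simp [hij]; omega
    have hasc' : extPerm (1 : Equiv.Perm (Fin p)) v (Fin.natAdd p i) <
        extPerm (1 : Equiv.Perm (Fin p)) v (Fin.natAdd p j) := by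
      rw [extPerm_natAdd, extPerm_natAdd]; simpa using hasc
    refine ⟨?_, ?_, ?_⟩
    · rw [extPerm_mul_swap]
      exact HAtom.step _ _ hij' h1 hasc' hs.ext
    · rw [extPerm_mul_swap, invLen_asc hij' _ hasc', invLen_asc hij _ hasc, h2]
    · rcases hs with ⟨h, rfl⟩ | ⟨h, h', rfl⟩
      · rw [extPerm_conj, fpfLen_asc hij' (extPerm_fpf (theta_fpf hp) hv.fpf), h3,
          fpfLen_asc hij hv.fpf h]
        rw [extPerm_natAdd, extPerm_natAdd]; simpa using h
      · exact h3

theorem ext_desc {p n : ℕ} (hp : p % 2 = 0) {z : Equiv.Perm (Fin n)} {i j : Fin (p + n)}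
    (hij : (j : ℕ) = i + 1) (h1 : extPerm (theta p hp) z j < extPerm (theta p hp) z i)
    (h2 : extPerm (theta p hp) z i ≠ j) : ∃ i' j' : Fin n, (j' : ℕ) = i' + 1 ∧
      i = Fin.natAdd p i' ∧ j = Fin.natAdd p j' := by
  by_cases hi : p ≤ (i : ℕ)
  · refine ⟨⟨i - p, by omega⟩, ⟨j - p, by omega⟩, by simp; omega, ?_, ?_⟩ <;>
    · apply Fin.ext; simp; omega
  · exfalso
    push Not at hi
    have ei : i = Fin.castAdd n ⟨i, hi⟩ := Fin.ext rfl
    rw [ei, extPerm_castAdd] at h1 h2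
    by_cases hj : (j : ℕ) < p
    · have ej : j = Fin.castAdd n ⟨j, hj⟩ := Fin.ext rfl
      rw [ej, extPerm_castAdd] at h1
      simp only [Fin.lt_def, Fin.val_castAdd, theta_val] at h1
      simp only [Fin.ext_iff, Fin.val_castAdd, theta_val, ne_eq] at h2
      split_ifs at h1 h2 <;> omega
    · have ej : j = Fin.natAdd p ⟨j - p, by omega⟩ := Fin.ext (by simp; omega)
      rw [ej, extPerm_natAdd] at h1
      have := (theta p hp ⟨i, hi⟩).isLt
      simp only [Fin.lt_def, Fin.val_castAdd, Fin.val_natAdd] at h1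
      omega

theorem HAtom.of_ext {p n : ℕ} (hp : p % 2 = 0) (hn : n % 2 = 0) {hpn : (p + n) % 2 = 0}
    {w' z' : Equiv.Perm (Fin (p + n))} (h : HAtom hpn w' z') (z : Equiv.Perm (Fin n))
    (hz : IsFPF z) (hz' : z' = extPerm (theta p hp) z) :
    ∃ w, w' = extPerm 1 w ∧ HAtom hn w z := by
  induction h generalizing z with
  | base =>
    rw [← extPerm_theta hp hn hpn] at hz'
    have := extPerm_inj hz'
    subst this
    exact ⟨1, extPerm_one.symm, HAtom.base⟩
  | @step v y z' i j hij hv hasc hs ih =>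
    obtain ⟨hd1, hd2⟩ := hs.desc hij hv.fpf
    rw [hz'] at hd1 hd2
    obtain ⟨i, j, hij', rfl, rfl⟩ := ext_desc hp hij hd1 hd2
    have fin : ∀ y0, IsFPF y0 → y = extPerm (theta p hp) y0 → HStep i j y0 z →
        ∃ w, v * Equiv.swap (Fin.natAdd p i) (Fin.natAdd p j) = extPerm 1 w ∧ HAtom hn w z := by
      intro y0 hy0 e hs0
      obtain ⟨w, rfl, hw⟩ := ih y0 hy0 e
      refine ⟨w * Equiv.swap i j, (extPerm_mul_swap _ _ _).symm, HAtom.step i j hij' hw ?_ hs0⟩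
      rw [extPerm_natAdd, extPerm_natAdd] at hasc
      simpa using hasc
    rw [extPerm_natAdd, extPerm_natAdd] at hd1
    rw [extPerm_natAdd] at hd2
    have hd1' : z j < z i := by simpa using hd1
    have hd2' : z i ≠ j := fun h => hd2 (by rw [h])
    rcases hs with ⟨h, h'⟩ | ⟨h, h', h''⟩
    · apply fin (Equiv.swap i j * z * Equiv.swap i j) (hz.conj i j)
      · rw [extPerm_conj, ← hz', h', conj_conj]
      · refine Or.inl ⟨?_, (conj_conj i j z).symm⟩
        rw [(hz.conj_desc hd2').1, (hz.conj_desc hd2').2]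
        exact hd1'
    · exact fin z hz (h''.symm.trans hz') (Or.inr ⟨hd1', hd2', rfl⟩)

theorem sum_ext {p n : ℕ} (hp : p % 2 = 0) (hn : n % 2 = 0) (hpn : (p + n) % 2 = 0)
    (z : Equiv.Perm (Fin n)) (hz : IsFPF z)
    (Gr : Equiv.Perm (Fin (p + n)) → MvPolynomial (Fin (p + n)) Rb) :
    ∑ w ∈ Bfpf (p + n) hpn (extPerm (theta p hp) z),
        C (bb ^ (invLen w - fpfLen (extPerm (theta p hp) z))) * Gr w =
      ∑ w ∈ Bfpf n hn z, C (bb ^ (invLen w - fpfLen z)) * Gr (extPerm 1 w) := by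
  symm
  refine Finset.sum_bij (fun w _ => extPerm 1 w) ?_ ?_ ?_ ?_
  · intro w hw
    rw [mem_Bfpf] at hw ⊢
    exact (hw.ext hp hpn).1
  · intro w _ w' _ h
    exact extPerm_inj h
  · intro w hw
    rw [mem_Bfpf] at hw
    obtain ⟨w0, rfl, h⟩ := hw.of_ext hp hn z hz rfl
    exact ⟨w0, (mem_Bfpf _ _ _).2 h, rfl⟩
  · intro w hw
    rw [mem_Bfpf] at hw
    obtain ⟨_, h2, h3⟩ := hw.ext hp hpn
    rw [h2, h3]

/-! ### Divided differences -/

theorem X_sub_ne {n : ℕ} {i j : Fin n} (h : i ≠ j) :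
    (X i - X j : MvPolynomial (Fin n) Rb) ≠ 0 := by
  rw [sub_ne_zero]
  intro e
  exact h (X_injective e)

/-- The action of the transposition `(i j)` on polynomials. -/
def sw {n : ℕ} (i j : Fin n) : MvPolynomial (Fin n) Rb →ₐ[Rb] MvPolynomial (Fin n) Rb :=
  rename ⇑(Equiv.swap i j)

theorem sw_sw {n : ℕ} (i j : Fin n) (f : MvPolynomial (Fin n) Rb) : sw i j (sw i j f) = f := by
  simp only [sw, rename_rename]
  have : (⇑(Equiv.swap i j) ∘ ⇑(Equiv.swap i j)) = id := by
    funext x; simp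
  rw [this, rename_id_apply]

theorem sw_X {n : ℕ} (i j k : Fin n) : sw i j (X k) = X (Equiv.swap i j k) := by
  simp [sw]

theorem sw_X_left {n : ℕ} (i j : Fin n) : sw i j (X i) = X j := by simp [sw]
theorem sw_X_right {n : ℕ} (i j : Fin n) : sw i j (X j) = X i := by simp [sw]
theorem sw_X_ne {n : ℕ} {i j k : Fin n} (h : k ≠ i) (h' : k ≠ j) : sw i j (X k) = X k := by
  simp [sw, Equiv.swap_apply_of_ne_of_ne h h']
theorem sw_C {n : ℕ} (i j : Fin n) (c : Rb) : sw i j (C c) = C c := by simp [sw]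

theorem isDD_iff {n : ℕ} (i j : Fin n) (f g : MvPolynomial (Fin n) Rb) :
    IsDivDiffB i j f g ↔
      (X i - X j) * g = (1 + C bb * X j) * f - (1 + C bb * X i) * sw i j f := by
  unfold IsDivDiffB
  rw [show rename ⇑(Equiv.swap i j) ((1 + C bb * X j) * f) = (1 + C bb * X i) * sw i j f by
    rw [map_mul, map_add, map_mul]; simp [sw]]

theorem dd_unique {n : ℕ} {i j : Fin n} (hij : i ≠ j) {f g g' : MvPolynomial (Fin n) Rb}
    (h : IsDivDiffB i j f g) (h' : IsDivDiffB i j f g') : g = g' := by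
  unfold IsDivDiffB at h h'
  exact mul_left_cancel₀ (X_sub_ne hij) (h.trans h'.symm)

theorem dd_sym {n : ℕ} {i j : Fin n} (hij : i ≠ j) {f g : MvPolynomial (Fin n) Rb}
    (h : IsDivDiffB i j f g) : sw i j g = g := by
  rw [isDD_iff] at h
  apply mul_left_cancel₀ (X_sub_ne hij)
  have := congrArg (sw i j) h
  simp only [map_mul, map_sub, map_add, map_one, sw_X_left, sw_X_right, sw_C, sw_sw] at this
  linear_combination -this - h

theorem dd_of_sym {n : ℕ} {i j : Fin n} {f : MvPolynomial (Fin n) Rb}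
    (h : sw i j f = f) : IsDivDiffB i j f (-C bb * f) := by
  rw [isDD_iff, h]; ring

theorem dd_zero {n : ℕ} (i j : Fin n) : IsDivDiffB i j 0 0 := by
  rw [isDD_iff]; simp

theorem dd_add {n : ℕ} {i j : Fin n} {f g f' g' : MvPolynomial (Fin n) Rb}
    (h : IsDivDiffB i j f g) (h' : IsDivDiffB i j f' g') :
    IsDivDiffB i j (f + f') (g + g') := by
  rw [isDD_iff] at *
  rw [map_add]
  linear_combination h + h'

theorem dd_sub {n : ℕ} {i j : Fin n} {f g f' g' : MvPolynomial (Fin n) Rb}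
    (h : IsDivDiffB i j f g) (h' : IsDivDiffB i j f' g') :
    IsDivDiffB i j (f - f') (g - g') := by
  rw [isDD_iff] at *
  rw [map_sub]
  linear_combination h - h'

theorem dd_symmul {n : ℕ} {i j : Fin n} {f g : MvPolynomial (Fin n) Rb}
    (h : IsDivDiffB i j f g) {c : MvPolynomial (Fin n) Rb} (hc : sw i j c = c) :
    IsDivDiffB i j (c * f) (c * g) := by
  rw [isDD_iff] at *
  rw [map_mul, hc]
  linear_combination c * h

theorem dd_C {n : ℕ} {i j : Fin n} {f g : MvPolynomial (Fin n) Rb}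
    (h : IsDivDiffB i j f g) (c : Rb) :
    IsDivDiffB i j (C c * f) (C c * g) := dd_symmul h (sw_C _ _ _)

theorem dd_sum {n : ℕ} {i j : Fin n} {ι : Type*} (s : Finset ι)
    {f g : ι → MvPolynomial (Fin n) Rb}
    (h : ∀ a ∈ s, IsDivDiffB i j (f a) (g a)) :
    IsDivDiffB i j (∑ a ∈ s, f a) (∑ a ∈ s, g a) := by
  classical
  induction s using Finset.induction_on with
  | empty => simpa using dd_zero i j
  | insert a s ha ih =>
    rw [Finset.sum_insert ha, Finset.sum_insert ha]
    exact dd_add (h a (by simp)) (ih fun b hb => h b (by simp [hb]))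

theorem ne_of_adj {n : ℕ} {i j : Fin n} (hij : (j : ℕ) = i + 1) : i ≠ j := by
  intro h; subst h; omega

/-- Ascents give symmetry for Grothendieck polynomials. -/
theorem gr_sym {n : ℕ} {Gr : Equiv.Perm (Fin n) → MvPolynomial (Fin n) Rb}
    (hGr : IsGrothFam n Gr) {i j : Fin n} (hij : (j : ℕ) = i + 1) (w : Equiv.Perm (Fin n))
    (h : w i < w j) : sw i j (Gr w) = Gr w := by
  have := hGr.2 (w * Equiv.swap i j) i j hij (by simpa using h)
  rw [mul_assoc, Equiv.swap_mul_self, mul_one] at this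
  exact dd_sym (ne_of_adj hij) this

theorem sp_asc {n : ℕ} {G : Equiv.Perm (Fin n) → MvPolynomial (Fin n) Rb}
    (hG : IsSpFam n G) {i j : Fin n} (hij : (j : ℕ) = i + 1) {z : Equiv.Perm (Fin n)}
    (hz : IsFPF z) (h : z i < z j) :
    IsDivDiffB i j (G (Equiv.swap i j * z * Equiv.swap i j)) (G z) := by
  have h1 := IsFPF.conj_asc hij hz h
  have h2 := IsFPF.ne_of_asc hij hz h
  have h3 := hz.conj i j
  have h4 : (Equiv.swap i j * z * Equiv.swap i j) i ≠ j := by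
    rw [h1.1]; exact hz.2 j
  have h5 : (Equiv.swap i j * z * Equiv.swap i j) j ≠ i := by
    rw [h1.2]; exact hz.2 i
  have := hG.2 _ h3 i j hij h4 h5 (by rw [h1.1, h1.2]; exact h)
  rwa [conj_conj] at this

theorem sp_sym {n : ℕ} {G : Equiv.Perm (Fin n) → MvPolynomial (Fin n) Rb}
    (hG : IsSpFam n G) {i j : Fin n} (hij : (j : ℕ) = i + 1) {z : Equiv.Perm (Fin n)}
    (hz : IsFPF z) (h : z i < z j) : sw i j (G z) = G z :=
  dd_sym (ne_of_adj hij) (sp_asc hG hij hz h)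

/-! ### The right hand side -/

/-- The right hand side of the identity. -/
def FF {n : ℕ} (hn : n % 2 = 0) (Gr : Equiv.Perm (Fin n) → MvPolynomial (Fin n) Rb)
    (z : Equiv.Perm (Fin n)) : MvPolynomial (Fin n) Rb :=
  ∑ w ∈ Bfpf n hn z, C (bb ^ (invLen w - fpfLen z)) * Gr w

theorem HAtom.asc_of_asc {n : ℕ} {hn : n % 2 = 0} {w z : Equiv.Perm (Fin n)}
    (h : HAtom hn w z) {i j : Fin n} (hij : (j : ℕ) = i + 1)
    (hz : ¬ (z j < z i ∧ z i ≠ j)) : w i < w j := by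
  rcases asc_or_desc hij w with h1 | h1
  · exact h1
  · obtain ⟨y, hy, hs⟩ := h.desc hij h1
    exact absurd (hs.desc hij hy.fpf) hz

theorem FF_sym_of_not {n : ℕ} {hn : n % 2 = 0}
    {Gr : Equiv.Perm (Fin n) → MvPolynomial (Fin n) Rb}
    (hGr : IsGrothFam n Gr) {i j : Fin n} (hij : (j : ℕ) = i + 1) (z : Equiv.Perm (Fin n))
    (h : ¬ (z j < z i ∧ z i ≠ j)) : sw i j (FF hn Gr z) = FF hn Gr z := by
  unfold FF
  rw [map_sum]
  refine Finset.sum_congr rfl fun w hw => ?_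
  rw [mem_Bfpf] at hw
  rw [map_mul, sw_C, gr_sym hGr hij w (hw.asc_of_asc hij h)]

theorem FF_dd {n : ℕ} {hn : n % 2 = 0}
    {Gr : Equiv.Perm (Fin n) → MvPolynomial (Fin n) Rb}
    (hGr : IsGrothFam n Gr) {i j : Fin n} (hij : (j : ℕ) = i + 1) {z : Equiv.Perm (Fin n)}
    (hz : IsFPF z) (h : z j < z i) (hm : z i ≠ j) :
    IsDivDiffB i j (FF hn Gr z) (FF hn Gr (Equiv.swap i j * z * Equiv.swap i j)) := by
  classical
  set s := Equiv.swap i j with hs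
  set y := s * z * s with hy
  have hyz : s * y * s = z := conj_conj i j z
  have hyf : IsFPF y := hz.conj i j
  have hyv := IsFPF.conj_desc (j := j) hz hm
  rw [← hs, ← hy] at hyv
  have hya : y i < y j := by rw [hyv.1, hyv.2]; exact h
  have hlen : fpfLen z = fpfLen y + 1 := by
    rw [← hyz]; exact fpfLen_asc hij hyf hya
  have hss : ∀ w : Equiv.Perm (Fin n), w * s * s = w := by
    intro w; rw [mul_assoc, hs, Equiv.swap_mul_self, mul_one]
  set t : Equiv.Perm (Fin n) → MvPolynomial (Fin n) Rb :=
    fun w => C (bb ^ (invLen w - fpfLen z)) * Gr w with ht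
  set B := Bfpf n hn z with hB
  set A := B.filter (fun w => w i < w j) with hA
  set A' := B.filter (fun w => ¬ w i < w j) with hA'
  set Y := Bfpf n hn y with hY
  have hsplit : FF hn Gr z = ∑ w ∈ A, t w + ∑ w ∈ A', t w :=
    (Finset.sum_filter_add_sum_filter_not B _ _).symm
  have hYasc : ∀ w ∈ Y, w i < w j := by
    intro w hw
    rw [hY, mem_Bfpf] at hw
    exact hw.asc_of_asc hij (fun hh => absurd hya (not_lt.mpr hh.1.le))
  have hdisj : Disjoint A Y := by
    rw [Finset.disjoint_left]
    intro w hw hw'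
    rw [hA, Finset.mem_filter, hB, mem_Bfpf] at hw
    rw [hY, mem_Bfpf] at hw'
    have := hw.1.unique hw'
    rw [this] at h
    exact absurd hya (not_lt.mpr h.le)
  have hA'eq : ∑ w ∈ A', t w = ∑ v ∈ A ∪ Y, t (v * s) := by
    symm
    refine Finset.sum_bij' (fun v _ => v * s) (fun v _ => v * s) ?_ ?_ ?_ ?_ ?_
    · intro v hv
      rw [hA', Finset.mem_filter, hB, mem_Bfpf]
      rw [Finset.mem_union] at hv
      rcases hv with hv | hv
      · rw [hA, Finset.mem_filter, hB, mem_Bfpf] at hv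
        refine ⟨HAtom.step i j hij hv.1 hv.2 (Or.inr ⟨h, hm, rfl⟩), ?_⟩
        simp [hs, hv.2.le]
      · have hva := hYasc v hv
        rw [hY, mem_Bfpf] at hv
        refine ⟨HAtom.step i j hij hv hva (Or.inl ⟨hya, hyz.symm⟩), ?_⟩
        simp [hs, hva.le]
    · intro w hw
      rw [hA', Finset.mem_filter, hB, mem_Bfpf] at hw
      have hwd : w j < w i := (asc_or_desc hij w).resolve_left hw.2
      obtain ⟨x, hx, hxs⟩ := hw.1.desc hij hwd
      rw [Finset.mem_union]
      rcases hxs with ⟨hx1, hx2⟩ | ⟨hx1, hx2, hx3⟩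
      · right
        rw [hY, mem_Bfpf]
        have : y = x := by rw [hy, hx2, hs, conj_conj]
        rw [this]; exact hx
      · left
        rw [hA, Finset.mem_filter, hB, mem_Bfpf]
        rw [hx3]
        exact ⟨hx, by simpa [hs] using hwd⟩
    · intro v _; exact hss v
    · intro v _; exact hss v
    · intro v _; rfl
  rw [hsplit, hA'eq, Finset.sum_union hdisj, ← add_assoc, ← Finset.sum_add_distrib]
  have hdesc : ∀ v : Equiv.Perm (Fin n), v i < v j → IsDivDiffB i j (Gr (v * s)) (Gr v) := by
    intro v hv
    have := hGr.2 (v * s) i j hij (by simpa [hs] using hv)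
    rwa [hss] at this
  have key1 : IsDivDiffB i j (∑ v ∈ A, (t v + t (v * s))) 0 := by
    have := dd_sum (i := i) (j := j) A (f := fun v => t v + t (v * s)) (g := fun v => 0) ?_
    · simpa using this
    · intro v hv
      rw [hA, Finset.mem_filter, hB, mem_Bfpf] at hv
      have hl := hv.1.len
      have e1 := dd_C (dd_of_sym (gr_sym hGr hij v hv.2)) (bb ^ (invLen v - fpfLen z))
      have e2 := dd_C (hdesc v hv.2) (bb ^ (invLen (v * s) - fpfLen z))
      have := dd_add e1 e2
      have hz0 : C (bb ^ (invLen v - fpfLen z)) * (-C bb * Gr v) +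
        C (bb ^ (invLen (v * s) - fpfLen z)) * Gr v = 0 := by
        rw [hs, invLen_asc hij v hv.2,
          show invLen v + 1 - fpfLen z = (invLen v - fpfLen z) + 1 by omega, pow_succ, C_mul]
        ring
      rw [hz0] at this
      exact this
  have key2 : IsDivDiffB i j (∑ v ∈ Y, t (v * s)) (FF hn Gr y) := by
    refine dd_sum Y fun v hv => ?_
    have hva := hYasc v hv
    have := dd_C (hdesc v hva) (bb ^ (invLen (v * s) - fpfLen z))
    rw [show invLen v - fpfLen y = invLen (v * s) - fpfLen z by
      rw [hs, invLen_asc hij v hva, hlen]; omega]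
    exact this
  simpa using dd_add key1 key2

/-! ### Symmetry at matched pairs -/

theorem sw_oplus {n : ℕ} (i j a b : Fin n) :
    sw i j (oplus a b) = oplus (Equiv.swap i j a) (Equiv.swap i j b) := by
  simp [oplus, sw]

theorem oplus_comm {n : ℕ} (a b : Fin n) : oplus a b = oplus b a := by
  unfold oplus; ring

theorem prod_sym {n : ℕ} {i j : Fin n} (hij : (j : ℕ) = i + 1) (Q : Fin n → Fin n → Prop)
    [DecidablePred fun p : Fin n × Fin n => p.1 < p.2 ∧ Q p.1 p.2]
    (hQ : ∀ a b, a < b → ¬ (a = i ∧ b = j) → Q a b → Q (Equiv.swap i j a) (Equiv.swap i j b)) :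
    sw i j (∏ p ∈ Finset.univ.filter (fun p : Fin n × Fin n => p.1 < p.2 ∧ Q p.1 p.2),
      oplus p.1 p.2) =
    ∏ p ∈ Finset.univ.filter (fun p : Fin n × Fin n => p.1 < p.2 ∧ Q p.1 p.2),
      oplus p.1 p.2 := by
  classical
  rw [map_prod]
  have hne := ne_of_adj hij
  have hlt : i < j := by rw [Fin.lt_def]; omega
  set φ : Fin n × Fin n → Fin n × Fin n := fun p =>
    if p.1 = i ∧ p.2 = j then p else (Equiv.swap i j p.1, Equiv.swap i j p.2) with hφ
  have hmem : ∀ p ∈ Finset.univ.filter (fun p : Fin n × Fin n => p.1 < p.2 ∧ Q p.1 p.2),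
      φ p ∈ Finset.univ.filter (fun p : Fin n × Fin n => p.1 < p.2 ∧ Q p.1 p.2) := by
    rintro ⟨a, b⟩ hp
    simp only [Finset.mem_filter, Finset.mem_univ, true_and] at hp ⊢
    by_cases h : a = i ∧ b = j
    · simp only [hφ, h, and_self, if_true]
      obtain ⟨rfl, rfl⟩ := h
      exact hp
    · simp only [hφ, h, if_false]
      refine ⟨?_, hQ a b hp.1 h hp.2⟩
      have h1 := hp.1
      rw [Fin.lt_def] at h1 ⊢
      simp only [Equiv.swap_apply_def]
      simp only [Fin.ext_iff] at h ⊢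
      split_ifs <;> omega
  have hinv : ∀ p ∈ Finset.univ.filter (fun p : Fin n × Fin n => p.1 < p.2 ∧ Q p.1 p.2),
      φ (φ p) = p := by
    rintro ⟨a, b⟩ hp
    simp only [Finset.mem_filter, Finset.mem_univ, true_and] at hp
    by_cases h : a = i ∧ b = j
    · simp [hφ, h]
    · have h' : ¬ (Equiv.swap i j a = i ∧ Equiv.swap i j b = j) := by
        rintro ⟨h1, h2⟩
        have h3 : a = j := by rw [← Equiv.swap_apply_self i j a, h1, Equiv.swap_apply_left]
        have h4 : b = i := by rw [← Equiv.swap_apply_self i j b, h2, Equiv.swap_apply_right]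
        subst h3 h4
        exact absurd hp.1 (not_lt.mpr hlt.le)
      simp only [hφ, h, h', if_false, Equiv.swap_apply_self]
  refine Finset.prod_bij' (fun p _ => φ p) (fun p _ => φ p) hmem hmem hinv hinv ?_
  rintro ⟨a, b⟩ _
  rw [sw_oplus]
  by_cases h : a = i ∧ b = j
  · simp only [hφ, h, and_self, if_true, Equiv.swap_apply_left, Equiv.swap_apply_right]
    exact oplus_comm _ _
  · simp only [hφ, h, if_false]

theorem sw_braid {n : ℕ} {a b c : Fin n} (hab : a ≠ b) (hac : a ≠ c) (hbc : b ≠ c)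
    (f : MvPolynomial (Fin n) Rb) :
    sw a b (sw b c (sw a b f)) = sw b c (sw a b (sw b c f)) := by
  simp only [sw, rename_rename]
  congr 2
  funext x
  simp only [Function.comp, Equiv.swap_apply_def]
  split_ifs <;> simp_all

theorem alg_A {n : ℕ} {a b c : Fin n} (hab : a ≠ b) (hac : a ≠ c) (hbc : b ≠ c)
    {f g h : MvPolynomial (Fin n) Rb} (hf : sw b c f = f) (hg : IsDivDiffB a b f g)
    (hh : IsDivDiffB b c g h) : sw a b h = h := by
  rw [isDD_iff] at hg hh
  have h3 := sw_braid hab hac hbc f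
  rw [hf] at h3
  have hg' := congrArg (sw b c) hg
  simp only [map_mul, map_sub, map_add, map_one, sw_X_left, sw_X_right, sw_C, hf,
    sw_X_ne hab hac] at hg'
  set f2 := sw a b f with hf2
  set f3 := sw b c f2 with hf3
  have e : (X a - X b) * (X a - X c) * (X b - X c) * h =
      (1 + C bb * X c) * (X a - X c) * ((1 + C bb * X b) * f - (1 + C bb * X a) * f2)
      - (1 + C bb * X b) * (X a - X b) * ((1 + C bb * X c) * f - (1 + C bb * X a) * f3) := by
    linear_combination (X a - X b) * (X a - X c) * hh + (1 + C bb * X c) * (X a - X c) * hg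
      - (1 + C bb * X b) * (X a - X b) * hg'
  have e' := congrArg (sw a b) e
  have hf22 : sw a b f2 = f := sw_sw _ _ _
  simp only [map_mul, map_sub, map_add, map_one, sw_X_left, sw_X_right, sw_C, hf22, h3, ← hf2,
    sw_X_ne hac.symm hbc.symm] at e'
  have hne := mul_ne_zero (mul_ne_zero (X_sub_ne hab) (X_sub_ne hac)) (X_sub_ne hbc)
  apply mul_left_cancel₀ hne
  linear_combination -e' - e

theorem alg_B {n : ℕ} {a b c : Fin n} (hab : a ≠ b) (hac : a ≠ c) (hbc : b ≠ c)
    {f g h : MvPolynomial (Fin n) Rb} (hf : sw a b f = f) (hg : IsDivDiffB b c f g)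
    (hh : IsDivDiffB a b g h) : sw b c h = h := by
  rw [isDD_iff] at hg hh
  have h3 := sw_braid hab hac hbc f
  rw [hf] at h3
  have hg' := congrArg (sw a b) hg
  simp only [map_mul, map_sub, map_add, map_one, sw_X_left, sw_X_right, sw_C, hf,
    sw_X_ne hac.symm hbc.symm] at hg'
  set f2 := sw b c f with hf2
  set f3 := sw a b f2 with hf3
  have e : (X a - X b) * (X a - X c) * (X b - X c) * h =
      (1 + C bb * X b) * (X a - X c) * ((1 + C bb * X c) * f - (1 + C bb * X b) * f2)
      - (1 + C bb * X a) * (X b - X c) * ((1 + C bb * X c) * f - (1 + C bb * X a) * f3) := by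
    linear_combination (X b - X c) * (X a - X c) * hh + (1 + C bb * X b) * (X a - X c) * hg
      - (1 + C bb * X a) * (X b - X c) * hg'
  have e' := congrArg (sw b c) e
  have hf22 : sw b c f2 = f := sw_sw _ _ _
  simp only [map_mul, map_sub, map_add, map_one, sw_X_left, sw_X_right, sw_C, hf22, ← h3, ← hf2,
    sw_X_ne hab hac] at e'
  have hne := mul_ne_zero (mul_ne_zero (X_sub_ne hab) (X_sub_ne hac)) (X_sub_ne hbc)
  apply mul_left_cancel₀ hne
  linear_combination -e' - e

theorem sw_comm {n : ℕ} {i j k l : Fin n} (h1 : i ≠ k) (h2 : i ≠ l) (h3 : j ≠ k) (h4 : j ≠ l)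
    (f : MvPolynomial (Fin n) Rb) : sw i j (sw k l f) = sw k l (sw i j f) := by
  simp only [sw, rename_rename]
  congr 2
  funext x
  simp only [Function.comp, Equiv.swap_apply_def]
  split_ifs <;> simp_all

theorem dd_sym_comm {n : ℕ} {i j k l : Fin n} (h1 : i ≠ k) (h2 : i ≠ l) (h3 : j ≠ k) (h4 : j ≠ l)
    (hkl : k ≠ l) {f g : MvPolynomial (Fin n) Rb} (hf : sw i j f = f) (hg : IsDivDiffB k l f g) :
    sw i j g = g := by
  rw [isDD_iff] at hg
  have := congrArg (sw i j) hg
  rw [map_mul, map_sub, map_sub, map_mul, map_mul, sw_comm h1 h2 h3 h4, hf] at this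
  simp only [map_add, map_mul, map_one, sw_C, sw_X_ne h1.symm h3.symm, sw_X_ne h2.symm h4.symm]
    at this
  exact mul_left_cancel₀ (X_sub_ne hkl) (this.trans hg.symm)

theorem sp_matched_aux {n : ℕ} {G : Equiv.Perm (Fin n) → MvPolynomial (Fin n) Rb}
    (hG : IsSpFam n G) (d : ℕ) : ∀ z : Equiv.Perm (Fin n), IsFPF z → n * n - invLen z ≤ d →
    ∀ i j : Fin n, (j : ℕ) = i + 1 → z i = j → sw i j (G z) = G z := by
  induction d using Nat.strong_induction_on with
  | _ d ih =>
  intro z hz hd i j hij hm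
  have hm' : z j = i := (IsFPF.match_iff hz).mp hm
  by_cases hasc : ∃ k l : Fin n, (l : ℕ) = k + 1 ∧ z k < z l
  · obtain ⟨k, l, hkl, hk⟩ := hasc
    have hne := IsFPF.ne_of_asc hkl hz hk
    have hup : ∀ (y : Equiv.Perm (Fin n)) (a b : Fin n), IsFPF y → (b : ℕ) = a + 1 → y a < y b →
        invLen y < invLen (Equiv.swap a b * y * Equiv.swap a b) := by
      intro y a b hy hab h
      have h1 := fpfLen_eq hy
      have h2 := fpfLen_eq (hy.conj a b)
      have h3 := fpfLen_asc hab hy h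
      omega
    have hv := IsFPF.conj_asc hkl hz hk
    have hz' := hz.conj k l
    have hlt := hup z k l hz hkl hk
    have hdd := sp_asc hG hkl hz hk
    have hle := invLen_le (Equiv.swap k l * z * Equiv.swap k l)
    have hki : k ≠ i := by
      rintro rfl
      have : l = j := Fin.ext (by omega)
      exact hne.1 (hm.trans this.symm)
    have hval : ∀ x, x ≠ k → x ≠ l → z x ≠ k → z x ≠ l →
        (Equiv.swap k l * z * Equiv.swap k l) x = z x := by
      intro x h1 h2 h3 h4
      simp [Equiv.swap_apply_of_ne_of_ne h1 h2, Equiv.swap_apply_of_ne_of_ne h3 h4]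
    set z' := Equiv.swap k l * z * Equiv.swap k l with hz'd
    by_cases hc1 : k = j
    · subst hc1
      have hil : i ≠ l := by intro h; rw [Fin.ext_iff] at h; omega
      have hv2 : z' i = l := by
        simp [hz'd, Equiv.swap_apply_of_ne_of_ne hki.symm hil, hm]
      have hzl : i < z l := by rw [← hm']; exact hk
      have e1 : z l ≠ k := by
        intro h; have := hz.app l; rw [h, hm'] at this; exact hil this
      have e2 := hz.2 l
      have hasc' : z' i < z' k := by
        rw [hv2, hv.1, Fin.lt_def]
        rw [Fin.lt_def] at hzl
        rw [Ne, Fin.ext_iff] at e1 e2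
        omega
      have hlt2 := hup z' i k hz' hij hasc'
      have hle2 := invLen_le (Equiv.swap i k * z' * Equiv.swap i k)
      have hdd2 := sp_asc hG hij hz' hasc'
      have hv' := IsFPF.conj_asc hij hz' hasc'
      have hs := ih (n * n - invLen (Equiv.swap i k * z' * Equiv.swap i k)) (by omega) _
        (hz'.conj i k) le_rfl k l hkl (by rw [hv'.2, hv2])
      exact alg_A (ne_of_adj hij) hil (ne_of_adj hkl) hs hdd2 hdd
    · by_cases hc2 : l = i
      · subst hc2
        have hkj : k ≠ j := hc1
        have hjl : j ≠ l := (ne_of_adj hij).symm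
        have hv2 : z' j = k := by
          simp [hz'd, Equiv.swap_apply_of_ne_of_ne hkj.symm hjl, hm']
        have hzl : z k < j := by rw [← hm]; exact hk
        have e1 : z k ≠ l := hne.1
        have e2 := hz.2 k
        have hasc' : z' l < z' j := by
          rw [hv2, hv.2, Fin.lt_def]
          rw [Fin.lt_def] at hzl
          rw [Ne, Fin.ext_iff] at e1 e2
          omega
        have hlt2 := hup z' l j hz' hij hasc'
        have hle2 := invLen_le (Equiv.swap l j * z' * Equiv.swap l j)
        have hdd2 := sp_asc hG hij hz' hasc'
        have hv' := IsFPF.conj_asc hij hz' hasc'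
        have hs := ih (n * n - invLen (Equiv.swap l j * z' * Equiv.swap l j)) (by omega) _
          (hz'.conj l j) le_rfl k l hkl (by
            rw [IsFPF.match_iff (hz'.conj l j), hv'.1, hv2])
        exact alg_B (ne_of_adj hkl) hkj (ne_of_adj hij) hs hdd2 hdd
      · have hlj : l ≠ j := by
          intro h; apply hki; rw [Fin.ext_iff] at h ⊢; omega
        have hs := ih (n * n - invLen z') (by omega) z' hz' le_rfl i j hij
          (by rw [hval i hki.symm (Ne.symm hc2) (by rw [hm]; exact Ne.symm hc1)
            (by rw [hm]; exact hlj.symm), hm])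
        exact dd_sym_comm hki.symm (Ne.symm hc2) (Ne.symm hc1) hlj.symm (ne_of_adj hkl) hs hdd
  · push Not at hasc
    have hrev : z = revPerm n := eq_rev_of_desc z (fun a b hab =>
      lt_of_le_of_ne (hasc a b hab) (fun h => ne_of_adj hab (z.injective h).symm))
    rw [hrev, hG.1]
    have hr : (revPerm n) i = j := by rw [← hrev]; exact hm
    have hr2 : n = 2 * (i : ℕ) + 2 := by
      have h1 := congrArg Fin.val hr
      simp only [revPerm, Equiv.coe_fn_mk, Fin.val_rev] at h1
      have := i.isLt
      omega
    unfold spTop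
    refine prod_sym hij (fun a b : Fin n => (a : ℕ) + (b : ℕ) + 2 ≤ n) ?_
    intro a b hab hne hQ
    rw [Fin.lt_def] at hab
    simp only [Equiv.swap_apply_def]
    simp only [Fin.ext_iff] at hne ⊢
    split_ifs <;> omega

theorem sp_matched {n : ℕ} {G : Equiv.Perm (Fin n) → MvPolynomial (Fin n) Rb}
    (hG : IsSpFam n G) {z : Equiv.Perm (Fin n)} (hz : IsFPF z) {i j : Fin n}
    (hij : (j : ℕ) = i + 1) (hm : z i = j) : sw i j (G z) = G z :=
  sp_matched_aux hG _ z hz le_rfl i j hij hm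

/-! ### Degree bounds -/

/-- The staircase bound on degrees in each variable. -/
def Stair {n : ℕ} (f : MvPolynomial (Fin n) Rb) : Prop :=
  ∀ i : Fin n, degreeOf i f + (i : ℕ) + 1 ≤ n

theorem degreeOf_lin_le {n : ℕ} (i k : Fin n) :
    degreeOf k (1 + C bb * X i : MvPolynomial (Fin n) Rb) ≤ if k = i then 1 else 0 := by
  refine (degreeOf_add_le _ _ _).trans ?_
  have h1 : degreeOf k (1 : MvPolynomial (Fin n) Rb) = 0 := by
    rw [← C_1, degreeOf_C]
  rw [h1]
  refine max_le (Nat.zero_le _) ((degreeOf_C_mul_le _ _ _).trans ?_)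
  rw [degreeOf_X]

theorem degreeOf_sub_ge {n : ℕ} {i j : Fin n} (h : i ≠ j) (k : Fin n) (hk : k = i ∨ k = j) :
    1 ≤ degreeOf k (X i - X j : MvPolynomial (Fin n) Rb) := by
  have : (Finsupp.single k 1) ∈ (X i - X j : MvPolynomial (Fin n) Rb).support := by
    rw [mem_support_iff, coeff_sub, coeff_X', coeff_X']
    rcases hk with rfl | rfl
    · simp [Finsupp.single_left_inj, h.symm]
    · simp [Finsupp.single_left_inj, h]
  simpa using monomial_le_degreeOf k this

theorem degreeOf_sw {n : ℕ} (i j k : Fin n) (f : MvPolynomial (Fin n) Rb) :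
    degreeOf k (sw i j f) = degreeOf (Equiv.swap i j k) f := by
  have := degreeOf_rename_of_injective (p := f) (Equiv.swap i j).injective (Equiv.swap i j k)
  rw [Equiv.swap_apply_self] at this
  exact this

theorem Stair.dd {n : ℕ} {i j : Fin n} (hij : (j : ℕ) = i + 1) {f g : MvPolynomial (Fin n) Rb}
    (hf : Stair f) (h : IsDivDiffB i j f g) : Stair g := by
  intro k
  by_cases hg : g = 0
  · subst hg; rw [degreeOf_zero]; omega
  rw [isDD_iff] at h
  have hne := ne_of_adj hij
  have h1 : degreeOf k ((X i - X j) * g) = degreeOf k (X i - X j : MvPolynomial (Fin n) Rb)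
    + degreeOf k g := degreeOf_mul_eq (X_sub_ne hne) hg
  rw [h] at h1
  have h2 := degreeOf_sub_le k ((1 + C bb * X j) * f) ((1 + C bb * X i) * sw i j f)
  have h3 := degreeOf_mul_le k (1 + C bb * X j) f
  have h4 := degreeOf_mul_le k (1 + C bb * X i) (sw i j f)
  have h5 := degreeOf_lin_le j k
  have h6 := degreeOf_lin_le i k
  rw [degreeOf_sw] at h4
  have hk := hf k
  have hi := hf i
  have hj := hf j
  by_cases hki : k = i
  · subst hki
    have := degreeOf_sub_ge hne k (Or.inl rfl)
    rw [Equiv.swap_apply_left] at h4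
    rw [if_neg hne] at h5
    rw [if_pos rfl] at h6
    have h7 := h2.trans (max_le_max h3 h4)
    have := le_max_iff.mp h7
    omega
  · by_cases hkj : k = j
    · subst hkj
      have := degreeOf_sub_ge hne k (Or.inr rfl)
      rw [Equiv.swap_apply_right] at h4
      rw [if_neg hne.symm] at h6
      rw [if_pos rfl] at h5
      have h7 := h2.trans (max_le_max h3 h4)
      have := le_max_iff.mp h7
      omega
    · rw [if_neg hki] at h6
      rw [if_neg hkj] at h5
      rw [Equiv.swap_apply_of_ne_of_ne hki hkj] at h4
      have h7 := h2.trans (max_le_max h3 h4)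
      have := le_max_iff.mp h7
      omega

theorem stair_grTop (n : ℕ) : Stair (grTop n) := by
  intro i
  unfold grTop
  have h := degreeOf_prod_le i Finset.univ
    (fun a : Fin n => (X a ^ (n - 1 - (a : ℕ)) : MvPolynomial (Fin n) Rb))
  have : ∑ a : Fin n, degreeOf i (X a ^ (n - 1 - (a : ℕ)) : MvPolynomial (Fin n) Rb)
      = n - 1 - (i : ℕ) := by
    rw [Finset.sum_eq_single i]
    · rw [degreeOf_X_self_pow]
    · intro b _ hb
      exact degreeOf_X_pow_of_ne _ hb.symm
    · simp
  have := i.isLt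
  omega

theorem degreeOf_oplus_le {n : ℕ} (a b k : Fin n) :
    degreeOf k (oplus a b) ≤ (if k = a then 1 else 0) + (if k = b then 1 else 0) := by
  unfold oplus
  refine (degreeOf_add_le _ _ _).trans (max_le ((degreeOf_add_le _ _ _).trans ?_) ?_)
  · rw [degreeOf_X, degreeOf_X]; omega
  · refine (degreeOf_C_mul_le _ _ _).trans ((degreeOf_mul_le _ _ _).trans ?_)
    rw [degreeOf_X, degreeOf_X]

theorem stair_spTop (n : ℕ) : Stair (spTop n) := by
  intro i
  unfold spTop
  set S := Finset.univ.filter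
      (fun p : Fin n × Fin n => p.1 < p.2 ∧ (p.1 : ℕ) + (p.2 : ℕ) + 2 ≤ n) with hS
  have h := degreeOf_prod_le i S (fun p => oplus p.1 p.2)
  have h2 : ∑ p ∈ S, degreeOf i (oplus p.1 p.2) ≤
      ∑ p ∈ S, if (i = p.1 ∨ i = p.2) then 1 else 0 := by
    refine Finset.sum_le_sum fun p hp => (degreeOf_oplus_le _ _ _).trans ?_
    have hp' := (Finset.mem_filter.mp hp).2.1
    rw [Fin.lt_def] at hp'
    simp only [Fin.ext_iff]
    split_ifs <;> omega
  rw [← Finset.card_filter] at h2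
  have h3 : (S.filter (fun p => i = p.1 ∨ i = p.2)).card ≤ (Finset.range (n - 1 - i)).card := by
    refine Finset.card_le_card_of_injOn (fun p => (p.1 : ℕ) + p.2 - i) ?_ ?_
    · rintro ⟨a, b⟩ hp
      simp only [Finset.coe_filter, hS, Finset.mem_filter, Finset.mem_univ, true_and,
        Set.mem_setOf_eq, Fin.lt_def, Fin.ext_iff] at hp
      simp only [Finset.coe_range, Set.mem_Iio]
      omega
    · rintro ⟨a, b⟩ hp ⟨c, d⟩ hq heq
      simp only [Finset.coe_filter, hS, Finset.mem_filter, Finset.mem_univ, true_and,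
        Set.mem_setOf_eq, Fin.lt_def, Fin.ext_iff] at hp hq heq
      simp only [Prod.mk.injEq, Fin.ext_iff]
      omega
  rw [Finset.card_range] at h3
  have := i.isLt
  omega

/-! ### Order bounds -/

/-- Scaling of all variables by a parameter. -/
def scl {n : ℕ} : MvPolynomial (Fin n) Rb →+* Polynomial (MvPolynomial (Fin n) Rb) :=
  eval₂Hom (Polynomial.C.comp C) (fun i => Polynomial.C (X i) * Polynomial.X)

theorem scl_X {n : ℕ} (i : Fin n) : scl (X i) = Polynomial.C (X i) * Polynomial.X := by
  simp [scl]

theorem scl_C {n : ℕ} (c : Rb) : scl (n := n) (C c) = Polynomial.C (C c) := by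
  simp [scl]

theorem scl_sw {n : ℕ} (i j : Fin n) (f : MvPolynomial (Fin n) Rb) :
    scl (sw i j f) = Polynomial.map (sw i j).toRingHom (scl f) := by
  induction f using MvPolynomial.induction_on with
  | C a => rw [sw_C, scl_C, Polynomial.map_C]; simp [sw_C]
  | add p q hp hq => rw [map_add, map_add, map_add, Polynomial.map_add, hp, hq]
  | mul_X p k hp =>
    rw [map_mul, map_mul, map_mul, Polynomial.map_mul, hp, sw_X, scl_X, scl_X,
      Polynomial.map_mul, Polynomial.map_C, Polynomial.map_X]
    simp [sw_X]

theorem scl_eval {n : ℕ} (f : MvPolynomial (Fin n) Rb) :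
    (scl f).eval 0 = C (constantCoeff f) := by
  induction f using MvPolynomial.induction_on with
  | C a => rw [scl_C]; simp
  | add p q hp hq => rw [map_add, Polynomial.eval_add, hp, hq, map_add, map_add]
  | mul_X p k hp => rw [map_mul, Polynomial.eval_mul, scl_X]; simp

/-- All monomials have degree at least `d`. -/
def OrdGE {n : ℕ} (d : ℕ) (f : MvPolynomial (Fin n) Rb) : Prop :=
  (Polynomial.X : Polynomial (MvPolynomial (Fin n) Rb)) ^ d ∣ scl f

theorem OrdGE.mono {n : ℕ} {d e : ℕ} (hde : e ≤ d) {f : MvPolynomial (Fin n) Rb}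
    (h : OrdGE d f) : OrdGE e f := (pow_dvd_pow _ hde).trans h

theorem OrdGE.const {n : ℕ} {d : ℕ} (hd : 1 ≤ d) {f : MvPolynomial (Fin n) Rb}
    (h : OrdGE d f) : constantCoeff f = 0 := by
  obtain ⟨q, hq⟩ := h.mono hd
  have := scl_eval f
  rw [hq] at this
  simp at this
  rw [eq_comm] at this
  simpa using this

theorem dvd_aux {S : Type*} [CommRing S] {t u v x y : Polynomial S} (h : t ∣ x) (h' : t ∣ y) :
    t ∣ u * x - v * y :=
  dvd_sub (dvd_mul_of_dvd_right h _) (dvd_mul_of_dvd_right h' _)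

theorem OrdGE.dd {n : ℕ} {i j : Fin n} (hij : i ≠ j) {d : ℕ} {f g : MvPolynomial (Fin n) Rb}
    (hf : OrdGE (d + 1) f) (h : IsDivDiffB i j f g) : OrdGE d g := by
  rw [isDD_iff] at h
  have h' := congrArg scl h
  rw [map_mul, map_sub, map_sub, map_mul, map_mul, scl_X, scl_X, scl_sw] at h'
  have hd : (Polynomial.X : Polynomial (MvPolynomial (Fin n) Rb)) ^ (d + 1) ∣
      Polynomial.C (X i - X j) * Polynomial.X * scl g := by
    have e : (Polynomial.C (X i - X j) * Polynomial.X : Polynomial (MvPolynomial (Fin n) Rb)) =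
        Polynomial.C (X i) * Polynomial.X - Polynomial.C (X j) * Polynomial.X := by
      rw [Polynomial.C_sub]; ring
    rw [e, h']
    refine dvd_aux hf ?_
    obtain ⟨q, hq⟩ := hf
    rw [hq, Polynomial.map_mul, Polynomial.map_pow, Polynomial.map_X]
    exact dvd_mul_right _ _
  rw [show Polynomial.C (X i - X j) * Polynomial.X * scl g =
    Polynomial.X * (Polynomial.C (X i - X j) * scl g) by ring, pow_succ',
    mul_dvd_mul_iff_left Polynomial.X_ne_zero, Polynomial.X_pow_dvd_iff] at hd
  unfold OrdGE
  rw [Polynomial.X_pow_dvd_iff]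
  intro k hk
  have := hd k hk
  rw [Polynomial.coeff_C_mul] at this
  exact (mul_eq_zero.mp this).resolve_left (X_sub_ne hij)

theorem ord_X {n : ℕ} (i : Fin n) : (Polynomial.X : Polynomial (MvPolynomial (Fin n) Rb)) ∣
    scl (X i) := by
  rw [scl_X]; exact dvd_mul_left _ _

theorem ord_grTop (n : ℕ) : OrdGE (invLen (revPerm n)) (grTop n) := by
  have h1 : invLen (revPerm n) ≤ ∑ a : Fin n, (n - 1 - (a : ℕ)) := by
    unfold invLen
    calc _ ≤ ((Finset.univ : Finset (Fin n)).sigma (fun a => Finset.Ioi a)).card := by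
          refine Finset.card_le_card_of_injOn (fun p => ⟨p.1, p.2⟩) ?_ ?_
          · intro p hp
            simp at hp ⊢
            exact hp.1
          · rintro ⟨a, b⟩ _ ⟨c, d⟩ _ h
            simpa using h
      _ = _ := by
          rw [Finset.card_sigma]
          simp
  refine OrdGE.mono h1 ?_
  unfold OrdGE grTop
  rw [map_prod, ← Finset.prod_pow_eq_pow_sum]
  refine Finset.prod_dvd_prod_of_dvd _ _ fun a _ => ?_
  rw [map_pow]
  exact pow_dvd_pow_of_dvd (ord_X a) _

theorem ord_spTop (n : ℕ) : OrdGE (fpfLen (revPerm n)) (spTop n) := by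
  have h1 : fpfLen (revPerm n) ≤ (Finset.univ.filter
      (fun p : Fin n × Fin n => p.1 < p.2 ∧ (p.1 : ℕ) + (p.2 : ℕ) + 2 ≤ n)).card := by
    unfold fpfLen
    refine Finset.card_le_card_of_injOn (fun p => (Fin.rev p.2, Fin.rev p.1)) ?_ ?_
    · rintro ⟨a, b⟩ hp
      simp only [revPerm, Equiv.coe_fn_mk, Finset.coe_filter, Finset.mem_univ, true_and,
        Set.mem_setOf_eq, Fin.lt_def, Fin.val_rev] at hp ⊢
      have := a.isLt
      have := b.isLt
      omega
    · rintro ⟨a, b⟩ _ ⟨c, d⟩ _ h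
      simp only [Prod.mk.injEq, Fin.rev_inj] at h ⊢
      exact ⟨h.2, h.1⟩
  refine OrdGE.mono h1 ?_
  unfold OrdGE spTop
  rw [map_prod, ← Finset.prod_const]
  refine Finset.prod_dvd_prod_of_dvd _ _ fun p _ => ?_
  unfold oplus
  rw [map_add, map_add, map_mul, map_mul]
  exact dvd_add (dvd_add (ord_X _) (ord_X _)) (((ord_X _).mul_right _).mul_left _)

theorem gr_bounds {n : ℕ} {Gr : Equiv.Perm (Fin n) → MvPolynomial (Fin n) Rb}
    (hGr : IsGrothFam n Gr) : ∀ w, Stair (Gr w) ∧ OrdGE (invLen w) (Gr w) := by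
  refine perm_down_induction _ ?_ ?_
  · rw [hGr.1]; exact ⟨stair_grTop n, ord_grTop n⟩
  · intro w i j hij h ih
    have := hGr.2 (w * Equiv.swap i j) i j hij (by simpa using h)
    rw [mul_assoc, Equiv.swap_mul_self, mul_one] at this
    rw [invLen_asc hij w h] at ih
    exact ⟨ih.1.dd hij this, ih.2.dd (ne_of_adj hij) this⟩

theorem sp_bounds {n : ℕ} {G : Equiv.Perm (Fin n) → MvPolynomial (Fin n) Rb}
    (hG : IsSpFam n G) : ∀ z, IsFPF z → Stair (G z) ∧ OrdGE (fpfLen z) (G z) := by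
  refine fpf_down_induction _ ?_ ?_
  · rw [hG.1]; exact ⟨stair_spTop n, ord_spTop n⟩
  · intro z i j hz hij h ih
    have := sp_asc hG hij hz h
    rw [fpfLen_asc hij hz h] at ih
    exact ⟨ih.1.dd hij this, ih.2.dd (ne_of_adj hij) this⟩

/-! ### Uniqueness -/

/-- Hypotheses of the uniqueness lemma. -/
def UHyp {n : ℕ} (D : MvPolynomial (Fin n) Rb) : Prop :=
  (∀ i j : Fin n, (j : ℕ) = i + 1 → sw i j D = D ∨
    (1 + C bb * X j) * D = (1 + C bb * X i) * sw i j D) ∧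
  (∀ k : Fin n, (k : ℕ) + 1 = n → ∀ m : Fin n →₀ ℕ, m k ≠ 0 → coeff m D = 0) ∧
  coeff 0 D = 0

theorem bb_ne : bb ≠ 0 := Polynomial.X_ne_zero

theorem UHyp.div {n : ℕ} {D : MvPolynomial (Fin n) Rb} (h : UHyp D) :
    ∃ D', D = C bb * D' ∧ UHyp D' := by
  obtain ⟨h1, h2, h3⟩ := h
  set ε : Rb →+* ℤ := Polynomial.constantCoeff with hε
  have hεb : ε bb = 0 := by simp [hε, bb]
  set f := map ε D with hf
  have hsw : ∀ i j : Fin n, map ε (sw i j D) = rename ⇑(Equiv.swap i j) f := by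
    intro i j
    simp only [sw, hf]
    rw [map_rename]
  have hsym : ∀ i j : Fin n, (j : ℕ) = i + 1 → rename ⇑(Equiv.swap i j) f = f := by
    intro i j hij
    rw [← hsw]
    rcases h1 i j hij with h | h
    · rw [h]
    · have := congrArg (map ε) h
      simp only [map_mul, map_add, map_one, map_C, hεb, map_zero, zero_mul, add_zero, one_mul]
        at this
      exact this.symm
  have hdeg : ∀ d : ℕ, ∀ k : Fin n, (k : ℕ) + 1 + d = n → degreeOf k f = 0 := by
    intro d
    induction d with
    | zero =>
      intro k hk
      rw [← Nat.le_zero, degreeOf_le_iff]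
      intro m hm
      by_contra hne
      rw [mem_support_iff, hf, coeff_map, h2 k hk m (by omega), map_zero] at hm
      exact hm rfl
    | succ d ih =>
      intro k hk
      set l : Fin n := ⟨k + 1, by omega⟩ with hl
      have := degreeOf_rename_of_injective (p := f) (Equiv.swap k l).injective k
      rw [hsym k l rfl, Equiv.swap_apply_left] at this
      rw [← this]
      exact ih l (by simp [hl]; omega)
  have hf0 : f = 0 := by
    ext m
    rw [coeff_zero]
    by_contra hne
    have hm : m = 0 := by
      ext k
      have := monomial_le_degreeOf k (mem_support_iff.mpr hne)
      rw [hdeg (n - 1 - k) k (by have := k.isLt; omega)] at this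
      simpa using this
    rw [hm, hf, coeff_map, h3, map_zero] at hne
    exact hne rfl
  have hdvd : C bb ∣ D := by
    rw [C_dvd_iff_dvd_coeff]
    intro m
    rw [bb, Polynomial.X_dvd_iff]
    have := congrArg (coeff m) hf0
    rw [hf, coeff_map] at this
    exact this
  obtain ⟨D', hD'⟩ := hdvd
  have hCb : (C bb : MvPolynomial (Fin n) Rb) ≠ 0 := by
    rw [Ne, C_eq_zero]; exact bb_ne
  refine ⟨D', hD', ?_, ?_, ?_⟩
  · intro i j hij
    rcases h1 i j hij with h | h
    · left
      rw [hD', map_mul, sw_C] at h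
      exact mul_left_cancel₀ hCb h
    · right
      rw [hD', map_mul, sw_C] at h
      apply mul_left_cancel₀ hCb
      linear_combination h
  · intro k hk m hm
    have := h2 k hk m hm
    rw [hD', coeff_C_mul] at this
    exact (mul_eq_zero.mp this).resolve_left bb_ne
  · rw [hD', coeff_C_mul] at h3
    exact (mul_eq_zero.mp h3).resolve_left bb_ne

theorem UHyp.eq_zero {n : ℕ} {D : MvPolynomial (Fin n) Rb} (h : UHyp D) : D = 0 := by
  have key : ∀ k : ℕ, ∀ D : MvPolynomial (Fin n) Rb, UHyp D → C (bb ^ k) ∣ D := by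
    intro k
    induction k with
    | zero => intro D _; simp
    | succ k ih =>
      intro D hD
      obtain ⟨D', rfl, h'⟩ := hD.div
      rw [pow_succ', C_mul]
      exact mul_dvd_mul_left _ (ih D' h')
  ext m : 1
  rw [coeff_zero]
  refine Polynomial.ext fun k => ?_
  have := (C_dvd_iff_dvd_coeff _ _).mp (key (k + 1) D h) m
  rw [bb, Polynomial.X_pow_dvd_iff] at this
  simpa using this k (by omega)

/-! ### Normalization -/

theorem dd_X_mul {n : ℕ} {i j : Fin n} {h : MvPolynomial (Fin n) Rb} (hs : sw i j h = h) :
    IsDivDiffB i j (X i * h) h := by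
  rw [isDD_iff, map_mul, hs, sw_X_left]; ring

theorem dd_oplus_mul {n : ℕ} {i j b : Fin n} (hi : b ≠ i) (hj : b ≠ j)
    {h : MvPolynomial (Fin n) Rb} (hs : sw i j h = h) :
    IsDivDiffB i j (oplus i b * h) h := by
  rw [isDD_iff, map_mul, hs, sw_oplus, Equiv.swap_apply_left, Equiv.swap_apply_of_ne_of_ne hi hj]
  unfold oplus; ring

/-- Exponents along the path for Grothendieck polynomials. -/
def gev (p k a : ℕ) : ℕ := if a < k then p - 2 - a else if a < p then p - 1 - a else 0

/-- Values along the path for Grothendieck polynomials. -/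
def gwv (p k a : ℕ) : ℕ :=
  if a < k then p - 2 - a else if a = k then p - 1 else if a < p then p - 1 - a else a

theorem gr_path_step {n : ℕ} {Gr : Equiv.Perm (Fin n) → MvPolynomial (Fin n) Rb}
    (hGr : IsGrothFam n Gr) {p k : ℕ} (hp : p ≤ n) (hk : k + 1 < p)
    (h : ∃ w : Equiv.Perm (Fin n), (∀ i, (w i : ℕ) = gwv p k i) ∧
      Gr w = ∏ a : Fin n, X a ^ gev p k a) :
    ∃ w : Equiv.Perm (Fin n), (∀ i, (w i : ℕ) = gwv p (k + 1) i) ∧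
      Gr w = ∏ a : Fin n, X a ^ gev p (k + 1) a := by
  obtain ⟨w, hw, hg⟩ := h
  set i : Fin n := ⟨k, by omega⟩ with hi
  set j : Fin n := ⟨k + 1, by omega⟩ with hj
  have hij : (j : ℕ) = i + 1 := rfl
  have hwi : (w i : ℕ) = p - 1 := by rw [hw]; simp [gwv, hi]
  have hwj : (w j : ℕ) = p - 1 - (k + 1) := by
    rw [hw]; simp only [gwv, hj]; split_ifs <;> omega
  have hd : w j < w i := by rw [Fin.lt_def]; omega
  have hdd := hGr.2 w i j hij hd
  have hprod : (∏ a : Fin n, (X a : MvPolynomial (Fin n) Rb) ^ gev p k a) =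
      X i * ∏ a : Fin n, X a ^ gev p (k + 1) a := by
    have : (X i : MvPolynomial (Fin n) Rb) = ∏ a : Fin n, X a ^ (if a = i then 1 else 0) := by
      rw [Finset.prod_eq_single i]
      · simp
      · intro b _ hb; simp [hb]
      · simp
    rw [this, ← Finset.prod_mul_distrib]
    refine Finset.prod_congr rfl fun a _ => ?_
    rw [← pow_add]
    congr 1
    simp only [gev, Fin.ext_iff, hi]
    split_ifs <;> omega
  have hsym : sw i j (∏ a : Fin n, X a ^ gev p (k + 1) a) =
      ∏ a : Fin n, X a ^ gev p (k + 1) a := by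
    rw [map_prod, ← Equiv.prod_comp (Equiv.swap i j)]
    refine Finset.prod_congr rfl fun a _ => ?_
    rw [map_pow, sw_X, Equiv.swap_apply_self]
    congr 1
    simp only [gev, Equiv.swap_apply_def, Fin.ext_iff, hi, hj]
    split_ifs <;> simp only at * <;> omega
  rw [hg, hprod] at hdd
  refine ⟨w * Equiv.swap i j, ?_, dd_unique (ne_of_adj hij) hdd (dd_X_mul hsym)⟩
  intro x
  rw [Equiv.Perm.mul_apply]
  by_cases h1 : x = i
  · rw [h1, Equiv.swap_apply_left, hwj]; simp only [gwv, hi]; split_ifs <;> omega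
  · by_cases h2 : x = j
    · rw [h2, Equiv.swap_apply_right, hwi]; simp only [gwv, hj]; split_ifs <;> omega
    · rw [Equiv.swap_apply_of_ne_of_ne h1 h2, hw]
      simp only [Fin.ext_iff, hi, hj] at h1 h2
      simp only [gwv]; split_ifs <;> omega

theorem gr_path {n : ℕ} {Gr : Equiv.Perm (Fin n) → MvPolynomial (Fin n) Rb}
    (hGr : IsGrothFam n Gr) : ∀ d p : ℕ, p + d = n → 1 ≤ p →
    ∃ w : Equiv.Perm (Fin n), (∀ i, (w i : ℕ) = gwv p 0 i) ∧
      Gr w = ∏ a : Fin n, X a ^ gev p 0 a := by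
  intro d
  induction d with
  | zero =>
    intro p hp hp1
    obtain rfl : p = n := by omega
    refine ⟨revPerm p, ?_, ?_⟩
    · intro i
      have := i.isLt
      simp only [revPerm, Equiv.coe_fn_mk, Fin.val_rev, gwv]
      split_ifs <;> omega
    · rw [hGr.1, grTop]
      refine Finset.prod_congr rfl fun a _ => ?_
      simp [gev]
  | succ d ih =>
    intro p hp hp1
    have h0 := ih (p + 1) (by omega) (by omega)
    have hall : ∀ k, k < p + 1 → ∃ w : Equiv.Perm (Fin n), (∀ i, (w i : ℕ) = gwv (p + 1) k i) ∧
        Gr w = ∏ a : Fin n, X a ^ gev (p + 1) k a := by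
      intro k
      induction k with
      | zero => intro _; exact h0
      | succ k ihk => intro hk; exact gr_path_step hGr (by omega) hk (ihk (by omega))
    obtain ⟨w, hw, hg⟩ := hall p (by omega)
    refine ⟨w, ?_, ?_⟩
    · intro i
      rw [hw]; simp only [gwv]; split_ifs <;> omega
    · rw [hg]
      refine Finset.prod_congr rfl fun a _ => ?_
      congr 1
      simp only [gev]; split_ifs <;> omega

theorem gr_one {n : ℕ} (hn : 0 < n) {Gr : Equiv.Perm (Fin n) → MvPolynomial (Fin n) Rb}
    (hGr : IsGrothFam n Gr) : Gr 1 = 1 := by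
  obtain ⟨w, hw, hg⟩ := gr_path hGr (n - 1) 1 (by omega) le_rfl
  have h1 : w = 1 := by
    ext i
    rw [hw]; simp only [gwv, Equiv.Perm.one_apply]; split_ifs <;> omega
  rw [h1] at hg
  rw [hg]
  refine Finset.prod_eq_one fun a _ => ?_
  have : gev 1 0 a = 0 := by simp only [gev]; split_ifs <;> omega
  rw [this, pow_zero]

/-- Values along the path for symplectic Grothendieck polynomials. -/
def szv (p k a : ℕ) : ℕ :=
  if p ≤ a then (if a % 2 = 0 then a + 1 else a - 1)
  else if a + 1 = p then k
  else if a = k then p - 1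
  else if a < k then (if p - 3 - a < k then p - 3 - a else p - 2 - a)
  else (if p - 2 - a < k then p - 2 - a else p - 1 - a)

/-- Pairs along the path for symplectic Grothendieck polynomials. -/
def sQ (p k a b : ℕ) : Prop :=
  a + b + 4 ≤ p ∨ (a + b + 3 = p ∧ k ≤ b) ∨ (a + b + 2 = p ∧ k ≤ a)

instance (p k a b : ℕ) : Decidable (sQ p k a b) := by unfold sQ; infer_instance

/-- Products along the path for symplectic Grothendieck polynomials. -/
def sP (n p k : ℕ) : MvPolynomial (Fin n) Rb :=
  ∏ q ∈ Finset.univ.filter (fun q : Fin n × Fin n => q.1 < q.2 ∧ sQ p k q.1 q.2), oplus q.1 q.2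

theorem sP_sym {n p k : ℕ} {i j : Fin n} (hi : (i : ℕ) = k)
    (hj : (j : ℕ) = k + 1) : sw i j (sP n p (k + 1)) = sP n p (k + 1) := by
  unfold sP
  refine prod_sym (by omega) (fun a b : Fin n => sQ p (k + 1) a b) ?_
  intro a b hab hne hQ
  rw [Fin.lt_def] at hab
  simp only [Equiv.swap_apply_def]
  simp only [sQ, Fin.ext_iff] at *
  split_ifs <;> omega

theorem sP_step {n p k : ℕ} (hp : p ≤ n) (hpe : p % 2 = 0) (hk : k + 1 ≤ p - 2) {i j : Fin n}
    (hi : (i : ℕ) = k) (hj : (j : ℕ) = k + 1) :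
    ∃ b : Fin n, b ≠ i ∧ b ≠ j ∧ sP n p k = oplus i b * sP n p (k + 1) := by
  classical
  by_cases hc : 2 * k + 2 < p
  · refine ⟨⟨p - 2 - k, by omega⟩, ?_, ?_, ?_⟩
    · rw [Ne, Fin.ext_iff]; simp only; omega
    · rw [Ne, Fin.ext_iff]; simp only; omega
    · unfold sP
      rw [← Finset.prod_insert (s := Finset.univ.filter
        (fun q : Fin n × Fin n => q.1 < q.2 ∧ sQ p (k + 1) q.1 q.2))
        (a := ((i, ⟨p - 2 - k, by omega⟩) : Fin n × Fin n)) (f := fun q => oplus q.1 q.2)]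
      · refine Finset.prod_congr ?_ fun _ _ => rfl
        ext ⟨a, b⟩
        simp only [Finset.mem_insert, Finset.mem_filter, Finset.mem_univ, true_and, Fin.lt_def,
          sQ, Prod.mk.injEq, Fin.ext_iff]
        omega
      · simp only [Finset.mem_filter, Finset.mem_univ, true_and, Fin.lt_def, sQ]
        omega
  · refine ⟨⟨p - 3 - k, by omega⟩, ?_, ?_, ?_⟩
    · rw [Ne, Fin.ext_iff]; simp only; omega
    · rw [Ne, Fin.ext_iff]; simp only; omega
    · unfold sP
      rw [oplus_comm, ← Finset.prod_insert (s := Finset.univ.filter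
        (fun q : Fin n × Fin n => q.1 < q.2 ∧ sQ p (k + 1) q.1 q.2))
        (a := ((⟨p - 3 - k, by omega⟩, i) : Fin n × Fin n)) (f := fun q => oplus q.1 q.2)]
      · refine Finset.prod_congr ?_ fun _ _ => rfl
        ext ⟨a, b⟩
        simp only [Finset.mem_insert, Finset.mem_filter, Finset.mem_univ, true_and, Fin.lt_def,
          sQ, Prod.mk.injEq, Fin.ext_iff]
        omega
      · simp only [Finset.mem_filter, Finset.mem_univ, true_and, Fin.lt_def, sQ]
        omega

/-- The invariant of the path. -/
def SInv {n : ℕ} (G : Equiv.Perm (Fin n) → MvPolynomial (Fin n) Rb) (p k : ℕ) : Prop :=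
  ∃ z : Equiv.Perm (Fin n), IsFPF z ∧ (∀ i, (z i : ℕ) = szv p k i) ∧ G z = sP n p k

theorem sp_path_step {n : ℕ} {G : Equiv.Perm (Fin n) → MvPolynomial (Fin n) Rb}
    (hG : IsSpFam n G) {p k : ℕ} (hp : p ≤ n) (hpe : p % 2 = 0) (hk : k + 1 ≤ p - 2)
    (h : SInv G p k) : SInv G p (k + 1) := by
  obtain ⟨z, hz, hv, hg⟩ := h
  set i : Fin n := ⟨k, by omega⟩ with hi
  set j : Fin n := ⟨k + 1, by omega⟩ with hj
  have hij : (j : ℕ) = i + 1 := rfl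
  have hzi : (z i : ℕ) = p - 1 := by
    rw [hv]; simp only [szv, hi]; split_ifs <;> omega
  have hzj : (z j : ℕ) = if p - 3 - k < k then p - 3 - k else p - 2 - k := by
    rw [hv]; simp only [szv, hj]; split_ifs <;> omega
  have hd : z j < z i := by rw [Fin.lt_def, hzi, hzj]; split_ifs <;> omega
  have hm : z i ≠ j := by rw [Ne, Fin.ext_iff, hzi]; simp only [hj]; omega
  have hm' : z j ≠ i := by
    intro e; exact hm ((IsFPF.match_iff hz).mpr e)
  have hdd := hG.2 z hz i j hij hm hm' hd
  obtain ⟨b, hb1, hb2, hb⟩ := sP_step hp hpe hk (i := i) (j := j) rfl rfl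
  rw [hg, hb] at hdd
  refine ⟨_, hz.conj i j, ?_, dd_unique (ne_of_adj hij) hdd
    (dd_oplus_mul hb1 hb2 (sP_sym rfl rfl))⟩
  intro x
  have hc := IsFPF.conj_desc (j := j) hz hm
  by_cases h1 : x = i
  · rw [h1, hc.1, hzj]; simp only [szv, hi]; split_ifs <;> omega
  · by_cases h2 : x = j
    · rw [h2, hc.2, hzi]; simp only [szv, hj]; split_ifs <;> omega
    · rw [Equiv.Perm.mul_apply, Equiv.Perm.mul_apply, Equiv.swap_apply_of_ne_of_ne h1 h2]
      have hx := hv x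
      simp only [Fin.ext_iff, hi, hj] at h1 h2
      simp only [Equiv.swap_apply_def, Fin.ext_iff, hi, hj]
      have hxl := x.isLt
      rw [apply_ite Fin.val, apply_ite Fin.val]
      simp only
      rw [hx]
      clear hx hv hc hdd hb hd hm hm' hzi hzj
      generalize (x : ℕ) = y at *
      simp only [szv]
      split_ifs <;> omega

theorem sp_path {n : ℕ} (hn : n % 2 = 0) {G : Equiv.Perm (Fin n) → MvPolynomial (Fin n) Rb}
    (hG : IsSpFam n G) : ∀ d p : ℕ, p + 2 * d = n → 2 ≤ p → SInv G p 0 := by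
  intro d
  induction d with
  | zero =>
    intro p hp hp1
    obtain rfl : p = n := by omega
    refine ⟨revPerm p, ⟨?_, ?_⟩, ?_, ?_⟩
    · ext x; simp [revPerm]
    · intro i h
      rw [Fin.ext_iff] at h
      simp only [revPerm, Equiv.coe_fn_mk, Fin.val_rev] at h
      have := i.isLt
      omega
    · intro i
      have := i.isLt
      simp only [revPerm, Equiv.coe_fn_mk, Fin.val_rev, szv]
      split_ifs <;> omega
    · rw [hG.1, spTop, sP]
      refine Finset.prod_congr ?_ fun _ _ => rfl
      ext ⟨a, b⟩
      simp only [Finset.mem_filter, Finset.mem_univ, true_and, Fin.lt_def, sQ]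
      omega
  | succ d ih =>
    intro p hp hp1
    have h0 := ih (p + 2) (by omega) (by omega)
    have hall : ∀ k, k ≤ p → SInv G (p + 2) k := by
      intro k
      induction k with
      | zero => intro _; exact h0
      | succ k ihk =>
        intro hk; exact sp_path_step hG (by omega) (by omega) (by omega) (ihk (by omega))
    obtain ⟨z, hz, hv, hg⟩ := hall p le_rfl
    refine ⟨z, hz, ?_, ?_⟩
    · intro i
      rw [hv]; simp only [szv]; split_ifs <;> omega
    · rw [hg, sP, sP]
      refine Finset.prod_congr ?_ fun _ _ => rfl
      ext ⟨a, b⟩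
      simp only [Finset.mem_filter, Finset.mem_univ, true_and, Fin.lt_def, sQ]
      omega

theorem sp_theta {n : ℕ} (hpos : 0 < n) (hn : n % 2 = 0)
    {G : Equiv.Perm (Fin n) → MvPolynomial (Fin n) Rb}
    (hG : IsSpFam n G) : G (theta n hn) = 1 := by
  obtain ⟨z, hz, hv, hg⟩ := sp_path hn hG (n / 2 - 1) 2 (by omega) le_rfl
  have h1 : z = theta n hn := by
    ext i
    rw [hv]
    rw [theta_val]
    simp only [szv]
    split_ifs <;> omega
  rw [h1] at hg
  rw [hg, sP]
  refine Finset.prod_eq_one ?_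
  rintro ⟨a, b⟩ h
  simp only [Finset.mem_filter, Finset.mem_univ, true_and, Fin.lt_def, sQ] at h
  omega

theorem HAtom.theta_eq {n : ℕ} {hn : n % 2 = 0} {w z : Equiv.Perm (Fin n)}
    (h : HAtom hn w z) (hz : z = theta n hn) : w = 1 := by
  refine eq_one_of_asc w fun i j hij => h.asc_of_asc hij ?_
  rintro ⟨h1, h2⟩
  rw [hz, Fin.lt_def, theta_val, theta_val] at h1
  rw [hz, Ne, Fin.ext_iff, theta_val] at h2
  split_ifs at h1 h2 <;> omega

theorem FF_theta {n : ℕ} (hpos : 0 < n) (hn : n % 2 = 0)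
    {Gr : Equiv.Perm (Fin n) → MvPolynomial (Fin n) Rb}
    (hGr : IsGrothFam n Gr) : FF hn Gr (theta n hn) = 1 := by
  have hB : Bfpf n hn (theta n hn) = {1} := by
    ext w
    rw [mem_Bfpf, Finset.mem_singleton]
    constructor
    · intro h; exact h.theta_eq rfl
    · rintro rfl; exact HAtom.base
  unfold FF
  rw [hB, Finset.sum_singleton, invLen_one, gr_one hpos hGr]
  simp

/-! ### The main theorem -/

theorem main_eq {n : ℕ} (hpos : 0 < n) (hn : n % 2 = 0)
    {G : Equiv.Perm (Fin n) → MvPolynomial (Fin n) Rb} (hG : IsSpFam n G)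
    {Gr : Equiv.Perm (Fin n) → MvPolynomial (Fin n) Rb} (hGr : IsGrothFam n Gr) :
    ∀ d : ℕ, ∀ z, IsFPF z → fpfLen z = d → G z = FF hn Gr z := by
  intro d
  induction d using Nat.strong_induction_on with
  | _ d ih =>
  intro z hz hd
  by_cases hth : z = theta n hn
  · rw [hth, sp_theta hpos hn hG, FF_theta hpos hn hGr]
  have hdown : ∀ i j : Fin n, (j : ℕ) = i + 1 → z j < z i → z i ≠ j →
      fpfLen z = fpfLen (Equiv.swap i j * z * Equiv.swap i j) + 1 := by
    intro i j hij h hm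
    have hyv := IsFPF.conj_desc (j := j) hz hm
    have := fpfLen_asc hij (hz.conj i j) (by rw [hyv.1, hyv.2]; exact h)
    rwa [conj_conj] at this
  have hpos' : 1 ≤ fpfLen z := by
    by_contra h0
    apply hth
    refine eq_theta hn hz fun i j hij => ?_
    by_contra hcon
    push Not at hcon
    have hlt : z j < z i := lt_of_le_of_ne hcon.1
      (fun h => ne_of_adj hij (z.injective h).symm)
    have := hdown i j hij hlt hcon.2
    omega
  rw [← sub_eq_zero]
  apply UHyp.eq_zero
  have hGb := sp_bounds hG z hz
  refine ⟨?_, ?_, ?_⟩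
  · intro i j hij
    by_cases hc : z j < z i ∧ z i ≠ j
    · right
      have h1 := hG.2 z hz i j hij hc.2 (fun e => hc.2 ((IsFPF.match_iff hz).mpr e)) hc.1
      have h2 := FF_dd (hn := hn) hGr hij hz hc.1 hc.2
      have h3 := hdown i j hij hc.1 hc.2
      have h4 := ih _ (by omega) (Equiv.swap i j * z * Equiv.swap i j) (hz.conj i j) rfl
      have h5 := dd_sub h1 h2
      rw [h4, sub_self, isDD_iff, mul_zero] at h5
      exact (sub_eq_zero.mp h5.symm)
    · left
      rw [map_sub, FF_sym_of_not hGr hij z hc]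
      congr 1
      by_cases hm : z i = j
      · exact sp_matched hG hz hij hm
      · rcases asc_or_desc hij z with h | h
        · exact sp_sym hG hij hz h
        · exact absurd ⟨h, hm⟩ hc
  · intro k hk m hm
    have hst : ∀ f : MvPolynomial (Fin n) Rb, Stair f → coeff m f = 0 := by
      intro f hf
      by_contra hne
      have h1 := monomial_le_degreeOf k (mem_support_iff.mpr hne)
      have h2 := hf k
      omega
    rw [coeff_sub, hst _ hGb.1, FF, coeff_sum, Finset.sum_eq_zero, sub_zero]
    intro w _
    rw [coeff_C_mul, hst _ (gr_bounds hGr w).1, mul_zero]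
  · have e1 : coeff 0 (G z) = 0 := hGb.2.const hpos'
    rw [coeff_sub, e1, FF, coeff_sum, Finset.sum_eq_zero, sub_zero]
    intro w hw
    rw [mem_Bfpf] at hw
    have e2 : coeff 0 (Gr w) = 0 := (gr_bounds hGr w).2.const (hpos'.trans hw.len)
    rw [coeff_C_mul, e2, mul_zero]

theorem statement9 (n : ℕ) (hpos : 0 < n) (hev : n % 2 = 0)
    (z : Equiv.Perm (Fin n)) (hz : IsFPF z) (m : ℕ)
    (G : Equiv.Perm (Fin (2 * m + n)) → MvPolynomial (Fin (2 * m + n)) Rb)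
    (hG : IsSpFam (2 * m + n) G)
    (Gr : Equiv.Perm (Fin (2 * m + n)) → MvPolynomial (Fin (2 * m + n)) Rb)
    (hGr : IsGrothFam (2 * m + n) Gr) :
    G (extPerm (theta (2 * m) (by omega)) z) =
      ∑ w ∈ Bfpf n hev z, C (bb ^ (invLen w - fpfLen z)) *
        Gr (extPerm (1 : Equiv.Perm (Fin (2 * m))) w) := by
  have hN : (2 * m + n) % 2 = 0 := by omega
  have h2m : (2 * m) % 2 = 0 := by omega
  rw [← sum_ext h2m hev hN z hz Gr]
  exact main_eq (by omega) hN hG hGr _ _ (extPerm_fpf (theta_fpf h2m) hz) rfl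

end
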